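/- arXiv:2307.07672 — 2 statements merged into one kernel-verified Lean document; each statement's English description precedes it below -/
import Mathlib

section
/- Let Ω be a nonempty finite set, p a full-support probability vector on Ω, n ≥ 1, and for each ω ∈ Ω let v^ω : Δ(Ω)^n → ℝ be continuous. Then the infimum in the dual representation of the value is attained: there exist real numbers V^ω (ω ∈ Ω) and continuous functions φ_i^ω : Δ(Ω) → ℝ (i ∈ {1,…,n}, ω ∈ Ω) with v^ω(x_1,…,x_n) ≤ V^ω + ∑_{i=1}^n φ_i^ω(x_i) for all (x_1,…,x_n) ∈ Δ(Ω)^n and all ω, with ∑_{ω∈Ω} x(ω)·φ_i^ω(x) = 0 for all x ∈ Δ(Ω) and all i, and with ∑_{ω∈Ω} p(ω)·V^ω equal to the value Val of the persuasion problem. -/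
open MeasureTheory

noncomputable section

abbrev Belief (Ω : Type) [Fintype Ω] : Type := stdSimplex ℝ Ω

variable {Ω : Type} [Fintype Ω] [MeasurableSpace Ω] [MeasurableSingletonClass Ω]

/-- The joint distribution of state and beliefs. -/
def jointP (p : Ω → ℝ) {X : Type} [MeasurableSpace X] (μ : Ω → Measure X) :
    Measure (Ω × X) :=
  ∑ ω : Ω, ENNReal.ofReal (p ω) • ((Measure.dirac ω).prod (μ ω))

/-- Feasibility of a collection of conditional belief distributions, n receivers. -/
def Feasible (p : Ω → ℝ) (n : ℕ) (μ : Ω → Measure (Fin n → Belief Ω)) : Prop :=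
  (∀ ω, IsProbabilityMeasure (μ ω)) ∧
  ∀ (i : Fin n) (ω' : Ω),
    (fun z : Ω × (Fin n → Belief Ω) => (z.2 i).1 ω')
      =ᵐ[jointP p μ]
      (jointP p μ)[Set.indicator {z : Ω × (Fin n → Belief Ω) | z.1 = ω'} (fun _ => (1 : ℝ)) |
        MeasurableSpace.comap (fun z : Ω × (Fin n → Belief Ω) => z.2 i) inferInstance]

/-- Feasibility of a collection of conditional belief distributions, single receiver. -/
def Feasible1 (p : Ω → ℝ) (lam : Ω → Measure (Belief Ω)) : Prop :=
  (∀ ω, IsProbabilityMeasure (lam ω)) ∧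
  ∀ ω' : Ω,
    (fun z : Ω × Belief Ω => (z.2).1 ω')
      =ᵐ[jointP p lam]
      (jointP p lam)[Set.indicator {z : Ω × Belief Ω | z.1 = ω'} (fun _ => (1 : ℝ)) |
        MeasurableSpace.comap (fun z : Ω × Belief Ω => z.2) inferInstance]

/-- the value of the persuasion problem -/
def Val (p : Ω → ℝ) (n : ℕ) (v : Ω → (Fin n → Belief Ω) → ℝ) : ℝ :=
  sSup { r | ∃ μ : Ω → Measure (Fin n → Belief Ω),
    Feasible p n μ ∧ r = ∑ ω : Ω, p ω * ∫ x, v ω x ∂(μ ω) }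

end

/-!
Relax the dual problem by asking only `∑ ω, x ω * φ i ω x ≤ 0` and by dropping the continuity of
the potentials. Replacing the potentials one after another by their `c`-transforms lowers them, so
that this inequality is preserved, and gives them the moduli of continuity of `v`. The resulting
points of bounded cost form a closed subset of a product of compact intervals, because belief in a
certain state bounds the potentials above and the majorization of `v` then bounds them below. By
Tychonoff's theorem the relaxed problem has a minimizer, whose potentials are continuous.
Subtracting from each potential its conditional expectation, which is nonpositive, turns the
inequality into an equality and keeps the majorization.

There is no duality gap: the minimal cost is a sublinear function of `v`, so by Hahn–Banach it has a
supporting linear functional at `v`. Being dominated by the cost, this functional is positive, gives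
each state its prior mass, and satisfies the Bayes identities
`E[1_{ω'} g(x_i)] = E[x_i(ω') g(x_i)]` for continuous `g`. The measures which represent it by the
Riesz theorem are therefore feasible, and their payoff is the minimal cost.
-/

section CompactSpace

lemma exists_forall_abs_le_of_continuous {ι X : Type*} [Finite ι] [TopologicalSpace X]
    [CompactSpace X] {f : ι → X → ℝ} (hf : ∀ i, Continuous (f i)) : ∃ M, ∀ i x, |f i x| ≤ M := by
  have := Fintype.ofFinite ι
  obtain ⟨M, hM⟩ := isCompact_univ.exists_bound_of_continuousOn
    (f := fun x i => f i x) (continuous_pi hf).continuousOn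
  exact ⟨M, fun i x => (norm_le_pi_norm _ i).trans (hM x (Set.mem_univ x))⟩

lemma integrable_of_continuous {X : Type*} [TopologicalSpace X] [CompactSpace X]
    [MeasurableSpace X] [OpensMeasurableSpace X] {ν : Measure X} [IsFiniteMeasure ν] {f : X → ℝ}
    (hf : Continuous f) : Integrable f ν :=
  hf.integrable_of_hasCompactSupport (HasCompactSupport.of_compactSpace f)

end CompactSpace

section LinearFunctionals

open scoped CompactlySupported in
lemma exists_measure_integral_eq {X : Type*} [TopologicalSpace X] [T2Space X] [CompactSpace X]
    [MeasurableSpace X] [BorelSpace X] (L : C(X, ℝ) →ₗ[ℝ] ℝ) (hL : ∀ f, 0 ≤ f → 0 ≤ L f) :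
    ∃ ν : Measure X, ∀ f : C(X, ℝ), ∫ x, f x ∂ν = L f := by
  let L' : C_c(X, ℝ) →ₗ[ℝ] ℝ :=
    { toFun := fun f => L f.toContinuousMap
      map_add' := fun f g => map_add L f.toContinuousMap g.toContinuousMap
      map_smul' := fun c f => map_smul L c f.toContinuousMap }
  let Λ := PositiveLinearMap.mk₀ L' fun f hf => hL f.toContinuousMap hf
  exact ⟨RealRMK.rieszMeasure Λ, fun f =>
    RealRMK.integral_rieszMeasure Λ (CompactlySupportedContinuousMap.continuousMapEquiv f)⟩

lemma exists_probabilityMeasures_integral_eq {Ω X : Type*} [Fintype Ω] [TopologicalSpace X]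
    [T2Space X] [CompactSpace X] [MeasurableSpace X] [BorelSpace X] {p : Ω → ℝ}
    (hp : ∀ ω, 0 < p ω) (L : (Ω → C(X, ℝ)) →ₗ[ℝ] ℝ) (hL : ∀ f, 0 ≤ f → 0 ≤ L f)
    (hconst : ∀ c : Ω → ℝ, L (fun ω => ContinuousMap.const X (c ω)) = ∑ ω, p ω * c ω) :
    ∃ μ : Ω → Measure X, (∀ ω, IsProbabilityMeasure (μ ω)) ∧
      ∀ f : Ω → C(X, ℝ), L f = ∑ ω, p ω * ∫ x, f ω x ∂(μ ω) := by
  classical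
  have hriesz ω := exists_measure_integral_eq
    ((p ω)⁻¹ • L ∘ₗ LinearMap.single ℝ (fun _ => C(X, ℝ)) ω) fun f hf =>
      mul_nonneg (inv_nonneg.2 (hp ω).le) (hL _ (Pi.single_nonneg.2 hf))
  choose μ hμ using hriesz
  have hμ_single ω (f : C(X, ℝ)) : p ω * ∫ x, f x ∂(μ ω) = L (Pi.single ω f) := by
    simp [hμ, (hp ω).ne']
  refine ⟨μ, fun ω => ⟨?_⟩, fun f => ?_⟩
  · have hmass : p ω * (μ ω).real Set.univ = p ω := by
      have hone : (fun ω' => ContinuousMap.const X ((Pi.single ω 1 : Ω → ℝ) ω')) =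
          Pi.single ω 1 := by
        ext ω' x
        rcases eq_or_ne ω' ω with rfl | hω <;> simp [*]
      have hsingle := hconst (Pi.single ω 1)
      rw [hone, ← hμ_single] at hsingle
      simpa [Pi.single_apply] using hsingle
    rw [← ENNReal.toReal_eq_one_iff]
    exact (mul_eq_left₀ (hp ω).ne').1 hmass
  · simp_rw [hμ_single, ← map_sum, Finset.univ_sum_single]

lemma exists_linearMap_le_of_sublinear {E : Type*} [AddCommGroup E] [Module ℝ E] {S : E → ℝ}
    (hsmul : ∀ c : ℝ, 0 < c → ∀ x, S (c • x) = c * S x) (hadd : ∀ x y, S (x + y) ≤ S x + S y)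
    (v : E) : ∃ L : E →ₗ[ℝ] ℝ, L v = S v ∧ ∀ x, L x ≤ S x := by
  have hzero : S 0 = 0 := by
    have := hsmul 2 two_pos 0
    rw [smul_zero] at this
    linarith
  have hle (c : ℝ) : c * S v ≤ S (c • v) := by
    rcases lt_trichotomy c 0 with hc | rfl | hc
    · have hneg := hadd (c • v) (-c • v)
      rw [← add_smul, add_neg_cancel, zero_smul, hzero, hsmul (-c) (neg_pos.2 hc)] at hneg
      linarith
    · simp [hzero]
    · exact (hsmul c hc v).ge
  have hwd (c : ℝ) (hc : c • v = 0) : RingHom.id ℝ c • S v = 0 := by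
    rcases smul_eq_zero.1 hc with rfl | rfl <;> simp [hzero]
  obtain ⟨L, hLv, hLS⟩ := exists_extension_of_le_sublinear
    (LinearPMap.mkSpanSingleton' v (S v) hwd) S hsmul hadd (by
      rintro ⟨x, hx⟩
      obtain ⟨c, rfl⟩ := Submodule.mem_span_singleton.1 hx
      rw [LinearPMap.mkSpanSingleton'_apply]
      exact hle c)
  refine ⟨L, ?_, hLS⟩
  exact (hLv ⟨v, Submodule.mem_span_singleton_self v⟩).trans
    (LinearPMap.mkSpanSingleton'_apply_self v (S v) hwd _)

end LinearFunctionals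

section ConditionalExpectation

variable {Y Z : Type*} [MeasurableSpace Y] [TopologicalSpace Z] [HasOuterApproxClosed Z]
  [MeasurableSpace Z] [BorelSpace Z] {P : Measure Y} {T : Y → Z}

open scoped BoundedContinuousFunction

lemma setIntegral_preimage_eq_zero_of_forall_integral_mul_eq_zero (hT : Measurable T) {k : Y → ℝ}
    (hk : Integrable k P) (h : ∀ g : Z →ᵇ ℝ, ∫ y, k y * g (T y) ∂P = 0) {A : Set Z}
    (hA : MeasurableSet A) : ∫ y in T ⁻¹' A, k y ∂P = 0 := by
  let ρ (f : Y → ℝ) : Measure Z := (P.withDensity fun y => ENNReal.ofReal (f y)).map T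
  have hfin {f : Y → ℝ} (hf : Integrable f P) : IsFiniteMeasure (ρ f) := by
    have := isFiniteMeasure_withDensity_ofReal hf.2
    infer_instance
  have hint {f : Y → ℝ} (hf : Integrable f P) (g : Z →ᵇ ℝ) :
      ∫ z, g z ∂(ρ f) = ∫ y, max (f y) 0 * g (T y) ∂P := by
    rw [integral_map hT.aemeasurable g.continuous.measurable.aestronglyMeasurable,
      integral_withDensity_eq_integral_toReal_smul₀ hf.aemeasurable.ennreal_ofReal (by simp)]
    simp [ENNReal.toReal_ofReal']
  have hmul {f : Y → ℝ} (hf : Integrable f P) (g : Z →ᵇ ℝ) :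
      Integrable (fun y => max (f y) 0 * g (T y)) P :=
    hf.pos_part.mul_bdd (c := ‖g‖) (g.continuous.measurable.comp hT).aestronglyMeasurable
      (.of_forall fun y => g.norm_coe_le_norm (T y))
  have := hfin hk
  have := hfin hk.neg
  -- The hypothesis says that `k⁺` and `k⁻` push forward to finite measures on `Z` that agree on
  -- bounded continuous functions.
  have heq : ρ k = ρ (-k) := by
    refine ext_of_forall_integral_eq_of_IsFiniteMeasure fun g => ?_
    rw [hint hk, hint hk.neg, ← sub_eq_zero, ← integral_sub (hmul hk g) (hmul hk.neg g)]
    simpa [← sub_mul, max_zero_sub_max_neg_zero_eq_self] using h g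
  have hρA (f : Y → ℝ) : ρ f A = ∫⁻ y in T ⁻¹' A, ENNReal.ofReal (f y) ∂P := by
    rw [Measure.map_apply hT hA, withDensity_apply _ (hT hA)]
  rw [integral_eq_lintegral_pos_part_sub_lintegral_neg_part hk.integrableOn, ← hρA k, heq, hρA]
  simp

theorem ae_eq_condExp_comap_iff [IsFiniteMeasure P] (hT : Measurable T) {f : Y → ℝ}
    (hf : Integrable f P) {b : Z → ℝ} (hb : Measurable b) (hbT : Integrable (fun y => b (T y)) P) :
    (fun y => b (T y)) =ᵐ[P] P[f | MeasurableSpace.comap T inferInstance] ↔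
      ∀ g : Z →ᵇ ℝ, ∫ y, f y * g (T y) ∂P = ∫ y, b (T y) * g (T y) ∂P := by
  have hgT (g : Z →ᵇ ℝ) : Measurable[MeasurableSpace.comap T inferInstance] fun y => g (T y) :=
    g.continuous.measurable.comp (comap_measurable T)
  have hmul {k : Y → ℝ} (hk : Integrable k P) (g : Z →ᵇ ℝ) :
      Integrable (fun y => k y * g (T y)) P :=
    hk.mul_bdd (c := ‖g‖) (g.continuous.measurable.comp hT).aestronglyMeasurable
      (.of_forall fun y => g.norm_coe_le_norm (T y))
  constructor
  · intro hcond g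
    have hpull := condExp_mul_of_stronglyMeasurable_right (hgT g).stronglyMeasurable (hmul hf g) hf
    rw [← integral_condExp hT.comap_le]
    refine integral_congr_ae ?_
    filter_upwards [hpull, hcond] with y hpull_y hcond_y
    rw [hcond_y]
    exact hpull_y
  · intro htest
    refine ae_eq_condExp_of_forall_setIntegral_eq hT.comap_le hf
      (fun _ _ _ => hbT.integrableOn) ?_
      (hb.comp (comap_measurable T)).stronglyMeasurable.aestronglyMeasurable
    rintro _ ⟨A, hA, rfl⟩ _
    rw [← sub_eq_zero, ← integral_sub hbT.integrableOn hf.integrableOn]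
    refine setIntegral_preimage_eq_zero_of_forall_integral_mul_eq_zero hT (hbT.sub hf)
      (fun g => ?_) hA
    simp [sub_mul, integral_sub (hmul hbT g) (hmul hf g), htest g]

end ConditionalExpectation

section CTransform

variable {ι X : Type*} [DecidableEq ι]

/-- `g : X → ℝ` increases from `t` to `s` by no more than the largest increase of `v` when its
`i`-th argument moves from `t` to `s`; thus `g` has every modulus of continuity that `v` has in its
`i`-th argument. The increases of `v` are encoded by their upper bounds `c`, which makes the
condition on `g` an intersection of pointwise inequalities. -/
def InheritsModulus (v : (ι → X) → ℝ) (i : ι) (g : X → ℝ) : Prop :=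
  ∀ s t c, (∀ x, v (Function.update x i s) ≤ v (Function.update x i t) + c) → g s ≤ g t + c

variable {v : (ι → X) → ℝ} {i : ι} {g : X → ℝ}

lemma InheritsModulus.of_sub_const {a : ℝ} (h : InheritsModulus (fun x => v x - a) i g) :
    InheritsModulus v i g :=
  fun s t c hc => h s t c fun x => by linarith [hc x]

lemma InheritsModulus.le_add_two_mul (h : InheritsModulus v i g) {M : ℝ} (hM : ∀ x, |v x| ≤ M)
    (s t : X) : g s ≤ g t + 2 * M :=
  h s t (2 * M) fun x => by
    linarith [(abs_le.1 (hM (Function.update x i s))).2,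
      (abs_le.1 (hM (Function.update x i t))).1]

lemma InheritsModulus.uniformContinuous [Finite ι] [PseudoMetricSpace X]
    (h : InheritsModulus v i g) (hv : UniformContinuous v) : UniformContinuous g := by
  have := Fintype.ofFinite ι
  rw [Metric.uniformContinuous_iff] at hv ⊢
  intro ε hε
  obtain ⟨δ, hδ, hvδ⟩ := hv (ε / 2) (half_pos hε)
  have hle {s t : X} (hst : dist s t < δ) : g s ≤ g t + ε / 2 := by
    refine h s t _ fun x => ?_
    have hdist : dist (Function.update x i s) (Function.update x i t) < δ := by
      refine (dist_pi_lt_iff hδ).2 fun j => ?_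
      rcases eq_or_ne j i with rfl | hj <;> simp [*]
    linarith [(abs_lt.1 (hvδ hdist)).2]
  refine ⟨δ, hδ, fun s t hst => abs_lt.2 ?_⟩
  constructor <;> linarith [hle hst, hle (dist_comm s t ▸ hst)]

lemma isClosed_setOf_inheritsModulus (v : (ι → X) → ℝ) (i : ι) :
    IsClosed {g : X → ℝ | InheritsModulus v i g} := by
  simp only [InheritsModulus, Set.ofPred_forall]
  exact isClosed_iInter fun s => isClosed_iInter fun t => isClosed_iInter fun c =>
    isClosed_iInter fun _ => isClosed_le (by fun_prop) (by fun_prop)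

variable [Fintype ι]

/-- The multi-marginal `c`-transform of optimal transport: the least function that can replace
`φ i` when `v` is to be dominated by the separable function `x ↦ ∑ j, φ j (x j)`. -/
noncomputable def cTransform (v : (ι → X) → ℝ) (φ : ι → X → ℝ) (i : ι) (t : X) : ℝ :=
  ⨆ x : ι → X, (v (Function.update x i t) - ∑ j ∈ Finset.univ.erase i, φ j (x j))

variable {φ : ι → X → ℝ}

lemma sub_sum_erase_le (h : ∀ x, v x ≤ ∑ j, φ j (x j)) (i : ι) (t : X) (x : ι → X) :
    v (Function.update x i t) - ∑ j ∈ Finset.univ.erase i, φ j (x j) ≤ φ i t := by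
  have hupd : ∑ j ∈ Finset.univ.erase i, φ j (Function.update x i t j) =
      ∑ j ∈ Finset.univ.erase i, φ j (x j) :=
    Finset.sum_congr rfl fun j hj => by rw [Function.update_of_ne (Finset.ne_of_mem_erase hj)]
  have hle := h (Function.update x i t)
  rw [← Finset.add_sum_erase _ _ (Finset.mem_univ i), hupd, Function.update_self] at hle
  linarith

lemma cTransform_le (h : ∀ x, v x ≤ ∑ j, φ j (x j)) (i : ι) (t : X) :
    cTransform v φ i t ≤ φ i t :=
  have : Nonempty X := ⟨t⟩
  ciSup_le (sub_sum_erase_le h i t)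

lemma le_cTransform (h : ∀ x, v x ≤ ∑ j, φ j (x j)) (i : ι) (t : X) (x : ι → X) :
    v (Function.update x i t) - ∑ j ∈ Finset.univ.erase i, φ j (x j) ≤ cTransform v φ i t :=
  le_ciSup ⟨φ i t, Set.forall_mem_range.2 (sub_sum_erase_le h i t)⟩ x

lemma le_sum_update_cTransform (h : ∀ x, v x ≤ ∑ j, φ j (x j)) (i : ι) (x : ι → X) :
    v x ≤ ∑ j, Function.update φ i (cTransform v φ i) j (x j) := by
  have hupd : ∑ j ∈ Finset.univ.erase i, Function.update φ i (cTransform v φ i) j (x j) =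
      ∑ j ∈ Finset.univ.erase i, φ j (x j) :=
    Finset.sum_congr rfl fun j hj => by rw [Function.update_of_ne (Finset.ne_of_mem_erase hj)]
  have hle := le_cTransform h i (x i) x
  rw [Function.update_eq_self] at hle
  rw [← Finset.add_sum_erase _ _ (Finset.mem_univ i), hupd, Function.update_self]
  linarith

lemma inheritsModulus_cTransform (h : ∀ x, v x ≤ ∑ j, φ j (x j)) (i : ι) :
    InheritsModulus v i (cTransform v φ i) := by
  intro s t c hc
  have : Nonempty X := ⟨s⟩
  exact ciSup_le fun x => by linarith [hc x, le_cTransform h i t x]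

lemma exists_le_inheritsModulus_le_sum (h : ∀ x, v x ≤ ∑ i, φ i (x i)) :
    ∃ ψ : ι → X → ℝ, ψ ≤ φ ∧ (∀ i, InheritsModulus v i (ψ i)) ∧ ∀ x, v x ≤ ∑ i, ψ i (x i) := by
  suffices hs : ∀ s : Finset ι, ∃ ψ : ι → X → ℝ,
      ψ ≤ φ ∧ (∀ i ∈ s, InheritsModulus v i (ψ i)) ∧ ∀ x, v x ≤ ∑ i, ψ i (x i) by
    simpa using hs Finset.univ
  intro s
  induction s using Finset.induction_on with
  | empty => exact ⟨φ, le_rfl, by simp, h⟩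
  | insert a s _ ih =>
    obtain ⟨ψ, hψφ, hψ, hvψ⟩ := ih
    refine ⟨Function.update ψ a (cTransform v ψ a), ?_, fun i hi => ?_,
      le_sum_update_cTransform hvψ a⟩
    · exact update_le_iff.2
        ⟨fun t => (cTransform_le hvψ a t).trans (hψφ a t), fun i _ => hψφ i⟩
    · rcases eq_or_ne i a with rfl | hia
      · simpa using inheritsModulus_cTransform hvψ i
      · simpa [hia] using hψ i (Finset.mem_of_mem_insert_of_ne hi hia)

end CTransform

section DualProblem

variable {Ω : Type} [Fintype Ω] {ι : Type*} [Fintype ι]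

lemma continuous_belief_apply (ω : Ω) : Continuous fun x : Belief Ω => x.1 ω :=
  (continuous_apply ω).comp continuous_subtype_val

/-- Feasibility of constants `V` and potentials `φ` in a relaxation of the dual problem, in which
the conditional expectation of the potentials may be negative and no continuity is required. -/
structure DualFeasible (v : Ω → (ι → Belief Ω) → ℝ) (V : Ω → ℝ) (φ : ι → Ω → Belief Ω → ℝ) :
    Prop where
  le_add_sum : ∀ ω x, v ω x ≤ V ω + ∑ i, φ i ω (x i)
  sum_mul_nonpos : ∀ i (x : Belief Ω), ∑ ω, x.1 ω * φ i ω x ≤ 0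

/-- The values of the dual objective at the feasible points of the relaxed dual problem. -/
def dualCosts (p : Ω → ℝ) (v : Ω → (ι → Belief Ω) → ℝ) : Set ℝ :=
  {r | ∃ V φ, DualFeasible v V φ ∧ ∑ ω, p ω * V ω = r}

/-- The infimum of the relaxed dual problem. -/
noncomputable def dualValue (p : Ω → ℝ) (v : Ω → (ι → Belief Ω) → ℝ) : ℝ :=
  sInf (dualCosts p v)

variable {p : Ω → ℝ} {v w : Ω → (ι → Belief Ω) → ℝ} {V W : Ω → ℝ} {φ ψ : ι → Ω → Belief Ω → ℝ}

lemma dualFeasible_zero (h : ∀ ω x, v ω x ≤ V ω) : DualFeasible v V (0 : ι → Ω → Belief Ω → ℝ) :=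
  ⟨by simpa using h, by simp⟩

lemma DualFeasible.add (hv : DualFeasible v V φ) (hw : DualFeasible w W ψ) :
    DualFeasible (v + w) (V + W) (φ + ψ) where
  le_add_sum ω x := by
    simp only [Pi.add_apply, Finset.sum_add_distrib]
    linarith [hv.le_add_sum ω x, hw.le_add_sum ω x]
  sum_mul_nonpos i x := by
    simp only [Pi.add_apply, mul_add, Finset.sum_add_distrib]
    linarith [hv.sum_mul_nonpos i x, hw.sum_mul_nonpos i x]

lemma DualFeasible.smul (h : DualFeasible v V φ) {c : ℝ} (hc : 0 ≤ c) :
    DualFeasible (c • v) (c • V) (c • φ) where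
  le_add_sum ω x := by
    simpa [mul_add, Finset.mul_sum] using mul_le_mul_of_nonneg_left (h.le_add_sum ω x) hc
  sum_mul_nonpos i x := by
    simpa [Finset.mul_sum, mul_left_comm] using
      mul_nonpos_of_nonneg_of_nonpos hc (h.sum_mul_nonpos i x)

lemma DualFeasible.exists_inheritsModulus [DecidableEq ι] (h : DualFeasible v V φ) :
    ∃ ψ, DualFeasible v V ψ ∧ ∀ i ω, InheritsModulus (v ω) i (ψ i ω) := by
  have hmajorant ω (x : ι → Belief Ω) : v ω x - V ω ≤ ∑ i, φ i ω (x i) :=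
    sub_le_iff_le_add'.2 (h.le_add_sum ω x)
  choose ψ hψφ hψ hvψ using fun ω => exists_le_inheritsModulus_le_sum (hmajorant ω)
  refine ⟨fun i ω => ψ ω i, ⟨fun ω x => sub_le_iff_le_add'.1 (hvψ ω x), fun i x => ?_⟩,
    fun i ω => (hψ ω i).of_sub_const⟩
  exact (Finset.sum_le_sum fun ω _ => mul_le_mul_of_nonneg_left (hψφ ω i x) (x.2.1 ω)).trans
    (h.sum_mul_nonpos i x)

/-- The belief that is certain of the state `ω`. -/
noncomputable def certainBelief (ω : Ω) : Belief Ω :=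
  open Classical in ⟨Pi.single ω 1, single_mem_stdSimplex ℝ ω⟩

lemma DualFeasible.certainBelief_nonpos (h : DualFeasible v V φ) (i : ι) (ω : Ω) :
    φ i ω (certainBelief ω) ≤ 0 := by
  classical
  have hsum : ∑ ω', (certainBelief ω).1 ω' * φ i ω' (certainBelief ω) =
      φ i ω (certainBelief ω) := by
    rw [Finset.sum_eq_single_of_mem ω (Finset.mem_univ ω) fun ω' _ hω' => by
      simp [certainBelief, hω']]
    simp [certainBelief]
  exact hsum.symm.trans_le (h.sum_mul_nonpos i _)

section Bounds

variable {M : ℝ} (hM : ∀ ω x, |v ω x| ≤ M)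
include hM

lemma DualFeasible.neg_le_constant (h : DualFeasible v V φ) (ω : Ω) : -M ≤ V ω := by
  have hφ : ∑ i, φ i ω (certainBelief ω) ≤ 0 :=
    Finset.sum_nonpos fun i _ => h.certainBelief_nonpos i ω
  linarith [h.le_add_sum ω fun _ => certainBelief ω,
    (abs_le.1 (hM ω fun _ => certainBelief ω)).1]

lemma DualFeasible.constant_le (h : DualFeasible v V φ) (hp : ∀ ω, 0 < p ω)
    (hpsum : ∑ ω, p ω = 1) {C : ℝ} (hC : ∑ ω, p ω * V ω ≤ C) (ω : Ω) :
    V ω ≤ (C + M) / p ω - M := by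
  have hterm : p ω * (V ω + M) ≤ ∑ ω', p ω' * (V ω' + M) :=
    Finset.single_le_sum (f := fun ω' => p ω' * (V ω' + M))
      (fun ω' _ => mul_nonneg (hp ω').le (by linarith [h.neg_le_constant hM ω']))
      (Finset.mem_univ ω)
  rw [le_sub_iff_add_le, le_div_iff₀' (hp ω)]
  calc p ω * (V ω + M) ≤ ∑ ω', p ω' * (V ω' + M) := hterm
    _ = ∑ ω', p ω' * V ω' + M := by
      simp only [mul_add, Finset.sum_add_distrib, ← Finset.sum_mul, hpsum, one_mul]
    _ ≤ C + M := by gcongr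

variable [DecidableEq ι] (hφ : ∀ i ω, InheritsModulus (v ω) i (φ i ω))
include hφ

lemma DualFeasible.potential_le (h : DualFeasible v V φ) (i : ι) (ω : Ω) (t : Belief Ω) :
    φ i ω t ≤ 2 * M := by
  linarith [(hφ i ω).le_add_two_mul (hM ω) t (certainBelief ω), h.certainBelief_nonpos i ω]

lemma DualFeasible.le_potential (h : DualFeasible v V φ) (i : ι) (ω : Ω) (t : Belief Ω) :
    -M - V ω - (Finset.univ.erase i).card * (2 * M) ≤ φ i ω t := by
  have hothers : ∑ j ∈ Finset.univ.erase i, φ j ω t ≤ (Finset.univ.erase i).card * (2 * M) := by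
    simpa using Finset.sum_le_card_nsmul (Finset.univ.erase i) (fun j => φ j ω t) (2 * M)
      fun j _ => h.potential_le hM hφ j ω t
  have hmajorant := h.le_add_sum ω fun _ => t
  rw [← Finset.add_sum_erase _ _ (Finset.mem_univ i)] at hmajorant
  linarith [(abs_le.1 (hM ω fun _ => t)).1]

end Bounds

section Attainment

lemma isClosed_setOf_dualFeasible (v : Ω → (ι → Belief Ω) → ℝ) :
    IsClosed {z : (Ω → ℝ) × (ι → Ω → Belief Ω → ℝ) | DualFeasible v z.1 z.2} := by
  have hset : {z : (Ω → ℝ) × (ι → Ω → Belief Ω → ℝ) | DualFeasible v z.1 z.2} =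
      {z | ∀ ω x, v ω x ≤ z.1 ω + ∑ i, z.2 i ω (x i)} ∩
        {z | ∀ i (x : Belief Ω), ∑ ω, x.1 ω * z.2 i ω x ≤ 0} :=
    Set.ext fun z => ⟨fun h => ⟨h.1, h.2⟩, fun h => ⟨h.1, h.2⟩⟩
  rw [hset]
  simp only [Set.ofPred_forall]
  refine .inter ?_ ?_ <;>
    exact isClosed_iInter fun _ => isClosed_iInter fun _ =>
      isClosed_le (by fun_prop) (by fun_prop)

/-- The feasible points of the relaxed dual problem whose cost is at most `C` and whose potentials
have the moduli of continuity of `v`. -/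
def dualCandidates [DecidableEq ι] (p : Ω → ℝ) (v : Ω → (ι → Belief Ω) → ℝ) (C : ℝ) :
    Set ((Ω → ℝ) × (ι → Ω → Belief Ω → ℝ)) :=
  {z | DualFeasible v z.1 z.2 ∧ (∀ i ω, InheritsModulus (v ω) i (z.2 i ω)) ∧
    ∑ ω, p ω * z.1 ω ≤ C}

lemma isClosed_dualCandidates [DecidableEq ι] (p : Ω → ℝ) (v : Ω → (ι → Belief Ω) → ℝ) (C : ℝ) :
    IsClosed (dualCandidates p v C) := by
  have hmodulus : IsClosed {z : (Ω → ℝ) × (ι → Ω → Belief Ω → ℝ) |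
      ∀ i ω, InheritsModulus (v ω) i (z.2 i ω)} := by
    simp only [Set.ofPred_forall]
    exact isClosed_iInter fun i => isClosed_iInter fun ω =>
      (isClosed_setOf_inheritsModulus (v ω) i).preimage
        (f := fun z : (Ω → ℝ) × (ι → Ω → Belief Ω → ℝ) => z.2 i ω) (by fun_prop)
  have hcost : IsClosed {z : (Ω → ℝ) × (ι → Ω → Belief Ω → ℝ) | ∑ ω, p ω * z.1 ω ≤ C} :=
    isClosed_le (by fun_prop) (by fun_prop)
  exact (isClosed_setOf_dualFeasible v).inter (hmodulus.inter hcost)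

lemma isCompact_dualCandidates [DecidableEq ι] (hp : ∀ ω, 0 < p ω) (hpsum : ∑ ω, p ω = 1) {M : ℝ}
    (hM : ∀ ω x, |v ω x| ≤ M) (C : ℝ) : IsCompact (dualCandidates p v C) := by
  let B ω := (C + M) / p ω - M
  let box : Set ((Ω → ℝ) × (ι → Ω → Belief Ω → ℝ)) :=
    (Set.univ.pi fun ω => Set.Icc (-M) (B ω)) ×ˢ
      (Set.univ.pi fun i => Set.univ.pi fun ω => Set.univ.pi fun _ =>
        Set.Icc (-M - B ω - (Finset.univ.erase i).card * (2 * M)) (2 * M))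
  have hbox : IsCompact box :=
    (isCompact_univ_pi fun _ => isCompact_Icc).prod
      (isCompact_univ_pi fun _ => isCompact_univ_pi fun _ => isCompact_univ_pi fun _ =>
        isCompact_Icc)
  refine hbox.of_isClosed_subset (isClosed_dualCandidates p v C) ?_
  rintro ⟨V, φ⟩ ⟨h, hφ, hC⟩
  have hVB ω : V ω ≤ B ω := h.constant_le hM hp hpsum hC ω
  refine ⟨fun ω _ => ⟨h.neg_le_constant hM ω, hVB ω⟩, fun i _ ω _ t _ =>
    ⟨?_, h.potential_le hM hφ i ω t⟩⟩
  linarith [hVB ω, h.le_potential hM hφ i ω t]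

theorem exists_isLeast_dualCosts (hp : ∀ ω, 0 < p ω) (hpsum : ∑ ω, p ω = 1)
    (hv : ∀ ω, Continuous (v ω)) :
    ∃ V φ, DualFeasible v V φ ∧ (∀ i ω, Continuous (φ i ω)) ∧
      IsLeast (dualCosts p v) (∑ ω, p ω * V ω) := by
  classical
  obtain ⟨M, hM⟩ := exists_forall_abs_le_of_continuous hv
  obtain ⟨φ₀, hφ₀, hmod₀⟩ :=
    (dualFeasible_zero fun ω x => (abs_le.1 (hM ω x)).2).exists_inheritsModulus
  have hnonempty : (dualCandidates p v M).Nonempty :=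
    ⟨(fun _ => M, φ₀), hφ₀, hmod₀, by simp [← Finset.sum_mul, hpsum]⟩
  obtain ⟨⟨V, φ⟩, ⟨h, hφ, hVM⟩, hmin⟩ :=
    (isCompact_dualCandidates hp hpsum hM M).exists_isMinOn hnonempty
      (f := fun z => ∑ ω, p ω * z.1 ω) (by fun_prop)
  have hφ_cont i ω : Continuous (φ i ω) :=
    ((hφ i ω).uniformContinuous
      (CompactSpace.uniformContinuous_of_continuous (hv ω))).continuous
  refine ⟨V, φ, h, hφ_cont, ⟨V, φ, h, rfl⟩, ?_⟩
  rintro _ ⟨V', φ', h', rfl⟩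
  rcases le_total (∑ ω, p ω * V' ω) M with hV'M | hMV'
  · obtain ⟨ψ, hψ, hmod⟩ := h'.exists_inheritsModulus
    exact hmin (show (V', ψ) ∈ dualCandidates p v M from ⟨hψ, hmod, hV'M⟩)
  · exact hVM.trans hMV'

lemma isLeast_dualValue (hp : ∀ ω, 0 < p ω) (hpsum : ∑ ω, p ω = 1) (hv : ∀ ω, Continuous (v ω)) :
    IsLeast (dualCosts p v) (dualValue p v) := by
  obtain ⟨V, φ, -, -, hleast⟩ := exists_isLeast_dualCosts hp hpsum hv
  rwa [dualValue, hleast.csInf_eq]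

lemma DualFeasible.dualValue_le (h : DualFeasible v V φ) (hp : ∀ ω, 0 < p ω)
    (hpsum : ∑ ω, p ω = 1) (hv : ∀ ω, Continuous (v ω)) : dualValue p v ≤ ∑ ω, p ω * V ω :=
  (isLeast_dualValue hp hpsum hv).2 ⟨V, φ, h, rfl⟩

end Attainment

section Sublinear

lemma dualValue_add_le (hp : ∀ ω, 0 < p ω) (hpsum : ∑ ω, p ω = 1) (hv : ∀ ω, Continuous (v ω))
    (hw : ∀ ω, Continuous (w ω)) : dualValue p (v + w) ≤ dualValue p v + dualValue p w := by
  obtain ⟨V, φ, hVφ, hV⟩ := (isLeast_dualValue hp hpsum hv).1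
  obtain ⟨W, ψ, hWψ, hW⟩ := (isLeast_dualValue hp hpsum hw).1
  calc dualValue p (v + w) ≤ ∑ ω, p ω * (V + W) ω :=
        (hVφ.add hWψ).dualValue_le hp hpsum fun ω => (hv ω).add (hw ω)
    _ = dualValue p v + dualValue p w := by
        simp only [← hV, ← hW, Pi.add_apply, mul_add, Finset.sum_add_distrib]

open scoped Pointwise in
lemma smul_dualCosts_subset (p : Ω → ℝ) (v : Ω → (ι → Belief Ω) → ℝ) {c : ℝ} (hc : 0 ≤ c) :
    c • dualCosts p v ⊆ dualCosts p (c • v) := by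
  rintro _ ⟨_, ⟨V, φ, h, rfl⟩, rfl⟩
  exact ⟨c • V, c • φ, h.smul hc, by simp [Finset.mul_sum, mul_left_comm]⟩

open scoped Pointwise in
lemma dualCosts_smul (p : Ω → ℝ) (v : Ω → (ι → Belief Ω) → ℝ) {c : ℝ} (hc : 0 < c) :
    dualCosts p (c • v) = c • dualCosts p v := by
  refine (smul_dualCosts_subset p v hc.le).antisymm' ?_
  rw [Set.subset_smul_set_iff₀ hc.ne']
  simpa [inv_smul_smul₀ hc.ne'] using smul_dualCosts_subset p (c • v) (inv_nonneg.2 hc.le)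

lemma dualValue_smul (p : Ω → ℝ) (v : Ω → (ι → Belief Ω) → ℝ) {c : ℝ} (hc : 0 < c) :
    dualValue p (c • v) = c * dualValue p v := by
  rw [dualValue, dualCosts_smul p v hc, Real.sInf_smul_of_nonneg hc.le, smul_eq_mul, dualValue]

end Sublinear

lemma DualFeasible.exists_continuous_sum_mul_eq_zero (h : DualFeasible v V φ)
    (hφ : ∀ i ω, Continuous (φ i ω)) :
    ∃ ψ, DualFeasible v V ψ ∧ (∀ i ω, Continuous (ψ i ω)) ∧
      ∀ i (x : Belief Ω), ∑ ω, x.1 ω * ψ i ω x = 0 := by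
  have hzero i (x : Belief Ω) : ∑ ω, x.1 ω * (φ i ω x - ∑ ω', x.1 ω' * φ i ω' x) = 0 := by
    have hx : ∑ ω, x.1 ω = 1 := x.2.2
    simp only [mul_sub, Finset.sum_sub_distrib, ← Finset.sum_mul, hx, one_mul, sub_self]
  refine ⟨fun i ω x => φ i ω x - ∑ ω', x.1 ω' * φ i ω' x, ⟨fun ω x => ?_, fun i x => ?_⟩,
    fun i ω => ?_, hzero⟩
  · refine (h.le_add_sum ω x).trans ?_
    gcongr with i
    linarith [h.sum_mul_nonpos i (x i)]
  · exact (hzero i x).le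
  · exact (hφ i ω).sub
      (continuous_finsetSum _ fun ω' _ => (continuous_belief_apply ω').mul (hφ i ω'))

end DualProblem

section Feasibility

section JointDistribution

lemma integrable_dirac_prod {X Y : Type*} [MeasurableSpace X] [MeasurableSpace Y]
    [MeasurableSingletonClass Y] {ν : Measure X} [SFinite ν] {y : Y} {F : Y × X → ℝ}
    (hF : Integrable (fun x => F (y, x)) ν) : Integrable F ((Measure.dirac y).prod ν) := by
  rw [Measure.dirac_prod]
  exact (measurableEmbedding_prodMk_left y).integrable_map_iff.2 hF

variable {Ω X : Type} [Fintype Ω] [MeasurableSpace Ω] [MeasurableSpace X] {p : Ω → ℝ}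
  {μ : Ω → Measure X}

lemma isFiniteMeasure_jointP (p : Ω → ℝ) (μ : Ω → Measure X) [∀ ω, IsFiniteMeasure (μ ω)] :
    IsFiniteMeasure (jointP p μ) := by
  have (ω : Ω) : IsFiniteMeasure (ENNReal.ofReal (p ω) • (Measure.dirac ω).prod (μ ω)) :=
    Measure.smul_finite _ ENNReal.ofReal_ne_top
  rw [jointP]
  infer_instance

variable [MeasurableSingletonClass Ω] [∀ ω, SFinite (μ ω)] {F : Ω × X → ℝ}
  (hF : ∀ ω, Integrable (fun x => F (ω, x)) (μ ω))
include hF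

lemma integrable_jointP (p : Ω → ℝ) : Integrable F (jointP p μ) :=
  integrable_finsetSum_measure.2 fun ω _ =>
    (integrable_dirac_prod (hF ω)).smul_measure ENNReal.ofReal_ne_top

lemma integral_jointP (hp : ∀ ω, 0 ≤ p ω) :
    ∫ z, F z ∂(jointP p μ) = ∑ ω, p ω * ∫ x, F (ω, x) ∂(μ ω) := by
  rw [jointP, integral_finsetSum_measure fun ω _ =>
    (integrable_dirac_prod (hF ω)).smul_measure ENNReal.ofReal_ne_top]
  refine Finset.sum_congr rfl fun ω _ => ?_
  rw [integral_smul_measure, ENNReal.toReal_ofReal (hp ω), smul_eq_mul, Measure.dirac_prod,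
    (measurableEmbedding_prodMk_left ω).integral_map]

end JointDistribution

variable {Ω : Type} [Fintype Ω] [MeasurableSpace Ω] [MeasurableSingletonClass Ω] {p : Ω → ℝ}
  {n : ℕ} {μ : Ω → Measure (Fin n → Belief Ω)}

open scoped BoundedContinuousFunction

theorem feasible_iff_forall_integral_eq (hp : ∀ ω, 0 ≤ p ω) [∀ ω, IsProbabilityMeasure (μ ω)] :
    Feasible p n μ ↔ ∀ (i : Fin n) (ω' : Ω) (g : Belief Ω →ᵇ ℝ),
      p ω' * ∫ x, g (x i) ∂(μ ω') = ∑ ω, p ω * ∫ x, (x i).1 ω' * g (x i) ∂(μ ω) := by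
  classical
  have := isFiniteMeasure_jointP p μ
  rw [Feasible, and_iff_right (by infer_instance)]
  refine forall₂_congr fun i ω' => ?_
  have hind (ω : Ω) (x : Fin n → Belief Ω) :
      Set.indicator {z : Ω × (Fin n → Belief Ω) | z.1 = ω'} (fun _ => (1 : ℝ)) (ω, x) =
        if ω = ω' then 1 else 0 := rfl
  have hcont (g : Belief Ω →ᵇ ℝ) : Continuous fun x : Fin n → Belief Ω => g (x i) :=
    g.continuous.comp (continuous_apply i)
  have hcoord : Continuous fun x : Fin n → Belief Ω => (x i).1 ω' :=
    (continuous_belief_apply ω').comp (continuous_apply i)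
  rw [ae_eq_condExp_comap_iff (T := fun z : Ω × (Fin n → Belief Ω) => z.2 i)
    (b := fun x => x.1 ω') (by fun_prop)
    (integrable_jointP (fun ω => by simp only [hind]; exact integrable_const _) p)
    (continuous_belief_apply ω').measurable
    (integrable_jointP (fun _ => integrable_of_continuous hcoord) p)]
  refine forall_congr' fun g => ?_
  rw [integral_jointP (fun ω => by
      simp only [hind]; exact (integrable_of_continuous (hcont g)).const_mul _) hp,
    integral_jointP (fun _ => integrable_of_continuous (hcoord.mul (hcont g))) hp]
  simp only [hind, integral_const_mul]
  simp

lemma Feasible.sum_integral_eq (hp : ∀ ω, 0 ≤ p ω) (hμ : Feasible p n μ) (i : Fin n)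
    {φ : Ω → Belief Ω → ℝ} (hφ : ∀ ω, Continuous (φ ω)) :
    ∑ ω, p ω * ∫ x, φ ω (x i) ∂(μ ω) =
      ∑ ω, p ω * ∫ x, ∑ ω', (x i).1 ω' * φ ω' (x i) ∂(μ ω) := by
  have := hμ.1
  have hint ω ω' : Integrable (fun x : Fin n → Belief Ω => (x i).1 ω' * φ ω' (x i)) (μ ω) :=
    integrable_of_continuous
      (((continuous_belief_apply ω').mul (hφ ω')).comp (continuous_apply i))
  have hbayes ω' := (feasible_iff_forall_integral_eq hp).1 hμ i ω'
    (BoundedContinuousFunction.mkOfCompact ⟨φ ω', hφ ω'⟩)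
  calc ∑ ω', p ω' * ∫ x, φ ω' (x i) ∂(μ ω')
      = ∑ ω', ∑ ω, p ω * ∫ x, (x i).1 ω' * φ ω' (x i) ∂(μ ω) :=
        Finset.sum_congr rfl fun ω' _ => hbayes ω'
    _ = ∑ ω, p ω * ∫ x, ∑ ω', (x i).1 ω' * φ ω' (x i) ∂(μ ω) := by
        rw [Finset.sum_comm]
        refine Finset.sum_congr rfl fun ω _ => ?_
        rw [integral_finsetSum _ fun ω' _ => hint ω ω', Finset.mul_sum]

end Feasibility

section Duality

variable {Ω : Type} [Fintype Ω] {p : Ω → ℝ} {n : ℕ}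

section WeakDuality

variable [MeasurableSpace Ω] [MeasurableSingletonClass Ω]
  {v : Ω → (Fin n → Belief Ω) → ℝ} {V : Ω → ℝ} {φ : Fin n → Ω → Belief Ω → ℝ}

theorem DualFeasible.sum_integral_le (h : DualFeasible v V φ) (hp : ∀ ω, 0 ≤ p ω)
    (hv : ∀ ω, Continuous (v ω)) (hφ : ∀ i ω, Continuous (φ i ω))
    {μ : Ω → Measure (Fin n → Belief Ω)} (hμ : Feasible p n μ) :
    ∑ ω, p ω * ∫ x, v ω x ∂(μ ω) ≤ ∑ ω, p ω * V ω := by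
  have := hμ.1
  have hφint i ω : Integrable (fun x : Fin n → Belief Ω => φ i ω (x i)) (μ ω) :=
    integrable_of_continuous ((hφ i ω).comp (continuous_apply i))
  have hpotential i : ∑ ω, p ω * ∫ x, φ i ω (x i) ∂(μ ω) ≤ 0 := by
    rw [hμ.sum_integral_eq hp i (hφ i)]
    exact Finset.sum_nonpos fun ω _ => mul_nonpos_of_nonneg_of_nonpos (hp ω)
      (integral_nonpos fun x => h.sum_mul_nonpos i (x i))
  calc ∑ ω, p ω * ∫ x, v ω x ∂(μ ω)
      ≤ ∑ ω, p ω * ∫ x, (V ω + ∑ i, φ i ω (x i)) ∂(μ ω) := by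
        gcongr with ω
        · exact hp ω
        · exact integrable_of_continuous (hv ω)
        · exact (integrable_const _).add (integrable_finsetSum _ fun i _ => hφint i ω)
        · exact h.le_add_sum ω
    _ = ∑ ω, p ω * V ω + ∑ i, ∑ ω, p ω * ∫ x, φ i ω (x i) ∂(μ ω) := by
        rw [Finset.sum_comm, ← Finset.sum_add_distrib]
        refine Finset.sum_congr rfl fun ω _ => ?_
        rw [integral_add (integrable_const _) (integrable_finsetSum _ fun i _ => hφint i ω),
          integral_finsetSum _ fun i _ => hφint i ω, mul_add, Finset.mul_sum]
        simp
    _ ≤ ∑ ω, p ω * V ω := add_le_of_nonpos_right (Finset.sum_nonpos fun i _ => hpotential i)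

end WeakDuality

section BoundedByDualCosts

variable {ι : Type*} [Fintype ι]

/-- The linear functional `L` is at most the dual cost `∑ ω, p ω * V ω` of every dual feasible point
for its argument, as is a supporting functional of the sublinear function `dualValue p`. -/
def BoundedByDualCosts (p : Ω → ℝ) (L : (Ω → C(ι → Belief Ω, ℝ)) →ₗ[ℝ] ℝ) : Prop :=
  ∀ f V φ, DualFeasible (fun ω x => f ω x) V φ → L f ≤ ∑ ω, p ω * V ω

namespace BoundedByDualCosts

variable {L : (Ω → C(ι → Belief Ω, ℝ)) →ₗ[ℝ] ℝ}

lemma map_nonneg (hL : BoundedByDualCosts p L) {f : Ω → C(ι → Belief Ω, ℝ)} (hf : 0 ≤ f) :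
    0 ≤ L f := by
  have hneg := hL (-f) 0 0 (dualFeasible_zero fun ω x => neg_nonpos.2 (hf ω x))
  simpa using hneg

lemma map_eq (hL : BoundedByDualCosts p L) {f : Ω → C(ι → Belief Ω, ℝ)} {V : Ω → ℝ}
    {φ : ι → Ω → Belief Ω → ℝ} (hf : ∀ ω x, f ω x = V ω + ∑ i, φ i ω (x i))
    (hφ : ∀ i (x : Belief Ω), ∑ ω, x.1 ω * φ i ω x = 0) : L f = ∑ ω, p ω * V ω := by
  refine (hL f V φ ⟨fun ω x => (hf ω x).le, fun i x => (hφ i x).le⟩).antisymm ?_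
  have hneg := hL (-f) (-V) (-φ)
    ⟨fun ω x => by simp [hf, add_comm], fun i x => by simp [hφ]⟩
  simpa using hneg

lemma map_const (hL : BoundedByDualCosts p L) (c : Ω → ℝ) :
    L (fun ω => ContinuousMap.const _ (c ω)) = ∑ ω, p ω * c ω :=
  hL.map_eq (φ := 0) (by simp) (by simp)

lemma map_eq_zero (hL : BoundedByDualCosts p L) {f : Ω → C(ι → Belief Ω, ℝ)} (i : ι)
    {ψ : Ω → Belief Ω → ℝ} (hf : ∀ ω x, f ω x = ψ ω (x i))
    (hψ : ∀ x : Belief Ω, ∑ ω, x.1 ω * ψ ω x = 0) : L f = 0 := by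
  classical
  have hsum ω (x : ι → Belief Ω) :
      ∑ j, (Pi.single i ψ : ι → Ω → Belief Ω → ℝ) j ω (x j) = ψ ω (x i) := by
    rw [Finset.sum_eq_single_of_mem i (Finset.mem_univ i) fun j _ hj => by simp [hj]]
    simp
  have hmap := hL.map_eq (f := f) (V := 0) (φ := Pi.single i ψ)
    (fun ω x => by simp [hf, hsum]) fun j x => by
      rcases eq_or_ne j i with rfl | hj <;> simp [*]
  simpa using hmap

lemma feasible [MeasurableSpace Ω] [MeasurableSingletonClass Ω]
    {L : (Ω → C(Fin n → Belief Ω, ℝ)) →ₗ[ℝ] ℝ} (hL : BoundedByDualCosts p L)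
    (hp : ∀ ω, 0 ≤ p ω) {μ : Ω → Measure (Fin n → Belief Ω)} [∀ ω, IsProbabilityMeasure (μ ω)]
    (hμ : ∀ f, L f = ∑ ω, p ω * ∫ x, f ω x ∂(μ ω)) : Feasible p n μ := by
  classical
  refine (feasible_iff_forall_integral_eq hp).2 fun i ω' g => ?_
  let ψ (ω : Ω) (x : Belief Ω) : ℝ := (if ω = ω' then 1 else 0) * g x - x.1 ω' * g x
  have hψ (x : Belief Ω) : ∑ ω, x.1 ω * ψ ω x = 0 := by
    have hx : ∑ ω, x.1 ω = 1 := x.2.2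
    simp [ψ, mul_sub, Finset.sum_sub_distrib, ← Finset.sum_mul, hx]
  have hg : Continuous fun x : Fin n → Belief Ω => g (x i) :=
    g.continuous.comp (continuous_apply i)
  have hcoord : Continuous fun x : Fin n → Belief Ω => (x i).1 ω' * g (x i) :=
    ((continuous_belief_apply ω').mul g.continuous).comp (continuous_apply i)
  have hint ω : ∫ x, ψ ω (x i) ∂(μ ω) = (if ω = ω' then 1 else 0) * ∫ x, g (x i) ∂(μ ω) -
      ∫ x, (x i).1 ω' * g (x i) ∂(μ ω) := by
    rw [← integral_const_mul]
    exact integral_sub ((integrable_of_continuous hg).const_mul _)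
      (integrable_of_continuous hcoord)
  have hsum : ∑ ω, p ω * ∫ x, ψ ω (x i) ∂(μ ω) = 0 :=
    (hμ fun ω => ⟨fun x => ψ ω (x i), (continuous_const.mul hg).sub hcoord⟩).symm.trans
      (hL.map_eq_zero i (fun _ _ => rfl) hψ)
  simp only [hint, mul_sub, Finset.sum_sub_distrib] at hsum
  simpa [sub_eq_zero] using hsum

end BoundedByDualCosts

end BoundedByDualCosts

variable [MeasurableSpace Ω] [MeasurableSingletonClass Ω] {v : Ω → (Fin n → Belief Ω) → ℝ}

theorem exists_feasible_sum_integral_eq_dualValue (hp : ∀ ω, 0 < p ω) (hpsum : ∑ ω, p ω = 1)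
    (hv : ∀ ω, Continuous (v ω)) :
    ∃ μ, Feasible p n μ ∧ ∑ ω, p ω * ∫ x, v ω x ∂(μ ω) = dualValue p v := by
  have hcont (f : Ω → C(Fin n → Belief Ω, ℝ)) ω : Continuous fun x => f ω x := (f ω).continuous
  obtain ⟨L, hLv, hLS⟩ := exists_linearMap_le_of_sublinear
    (S := fun f : Ω → C(Fin n → Belief Ω, ℝ) => dualValue p fun ω x => f ω x)
    (fun c hc f => dualValue_smul p _ hc)
    (fun f g => dualValue_add_le hp hpsum (hcont f) (hcont g)) fun ω => ⟨v ω, hv ω⟩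
  have hL : BoundedByDualCosts p L := fun f V φ h =>
    (hLS f).trans (h.dualValue_le hp hpsum (hcont f))
  obtain ⟨μ, hprob, hμ⟩ := exists_probabilityMeasures_integral_eq hp L
    (fun f => hL.map_nonneg) hL.map_const
  exact ⟨μ, hL.feasible (fun ω => (hp ω).le) hμ, (hμ _).symm.trans hLv⟩

theorem val_eq_dualValue (hp : ∀ ω, 0 < p ω) (hpsum : ∑ ω, p ω = 1)
    (hv : ∀ ω, Continuous (v ω)) : Val p n v = dualValue p v := by
  obtain ⟨μ, hμ, hμv⟩ := exists_feasible_sum_integral_eq_dualValue hp hpsum hv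
  obtain ⟨V, φ, h, hφ, hleast⟩ := exists_isLeast_dualCosts hp hpsum hv
  refine IsGreatest.csSup_eq ⟨⟨μ, hμ, hμv.symm⟩, ?_⟩
  rintro _ ⟨ν, hν, rfl⟩
  rw [dualValue, hleast.csInf_eq]
  exact h.sum_integral_le (fun ω => (hp ω).le) hv hφ hν

end Duality

/-- for continuous utilities the dual optimum is attained. -/
theorem dual_optimum_attained
    {Ω : Type} [Fintype Ω] [Nonempty Ω] [MeasurableSpace Ω] [MeasurableSingletonClass Ω]
    (p : Ω → ℝ) (hp : ∀ ω, 0 < p ω) (hpsum : ∑ ω : Ω, p ω = 1)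
    (n : ℕ) (hn : 1 ≤ n)
    (v : Ω → (Fin n → Belief Ω) → ℝ)
    (hv : ∀ ω, Continuous (v ω)) :
    ∃ (V : Ω → ℝ) (φ : Fin n → Ω → Belief Ω → ℝ),
      (∀ (i : Fin n) (ω : Ω), Continuous (φ i ω)) ∧
      (∀ (ω : Ω) (x : Fin n → Belief Ω), v ω x ≤ V ω + ∑ i : Fin n, φ i ω (x i)) ∧
      (∀ (i : Fin n) (x : Belief Ω), ∑ ω : Ω, x.1 ω * φ i ω x = 0) ∧
      ∑ ω : Ω, p ω * V ω = Val p n v := by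
  obtain ⟨V, φ, h, hφ, hleast⟩ := exists_isLeast_dualCosts hp hpsum hv
  obtain ⟨ψ, hψ, hψ_cont, hψ_zero⟩ := h.exists_continuous_sum_mul_eq_zero hφ
  refine ⟨V, ψ, hψ_cont, hψ.le_add_sum, hψ_zero, ?_⟩
  rw [val_eq_dualValue hp hpsum hv, dualValue, hleast.csInf_eq]
end

section
/- Let Ω be a finite set with |Ω| ≥ 2, p a full-support probability vector on Ω, n ≥ 1, ω₀ ∈ Ω, and let v : Δ(Ω)^n → ℝ be bounded and upper semicontinuous. Consider the one-state persuasion problem with utilities v^{ω₀} = v and v^ω ≡ 0 for ω ≠ ω₀. Then its value Val equals p(ω₀) times the supremum of ∫ v dπ over Borel probability measures π on Δ(Ω)^n whose i-th marginals π_i satisfy ∫ x(ω)/x(ω₀) dπ_i(x) ≤ p(ω)/p(ω₀) for every i ∈ {1,…,n} and every ω ≠ ω₀ (integrals in [0,∞] with conventions 0/0 = 0 and a/0 = ∞ for a > 0) and whose support has cardinality at most n·(|Ω|−1)+1; moreover this supremum is attained. -/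
open MeasureTheory

open scoped ENNReal NNReal Matrix

/-!
Bayes' rule fixes the law of a receiver's belief in state `ω` wherever `x ω₀ > 0`: up to the prior
odds it is the law in state `ω₀` reweighted by the likelihood ratio `x ω / x ω₀`. Its mass being at
most one is the constraint on the marginals. Conversely, the missing mass can be spent on revealing
`ω`, and the beliefs of different receivers can be drawn independently in the states `ω ≠ ω₀`, so
the constraints are also sufficient.

This leaves a linear program over probability measures with `n * (|Ω| - 1)` lower semicontinuous
constraints. Budget vectors respected by some measure with at most `N` atoms form a set that is
convex, since a Carathéodory step deletes an atom at no cost as long as there are more atoms than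
integrals to control, and closed, by compactness. It hence contains the vector of integrals of every
probability measure, so any measure is matched in all constraints and in the objective by one with
`n * (|Ω| - 1) + 1` atoms; among these, compactness provides a maximizer.
-/

section FiniteSupport

variable {X ι K : Type*} [Fintype K]

theorem exists_ne_zero_sum_eq_zero_mulVec_nonpos [Fintype ι] [Nonempty ι]
    (hcard : Fintype.card ι < Fintype.card K) (a : Matrix ι K ℝ) :
    ∃ d : K → ℝ, d ≠ 0 ∧ ∑ k, d k = 0 ∧ a *ᵥ d ≤ 0 := by
  classical
  -- Giving up one row of `a` makes room for the equation `∑ k, d k = 0`;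
  -- the sign of `d` then settles the row given up.
  obtain ⟨j₀⟩ := ‹Nonempty ι›
  have hker : LinearMap.ker (Matrix.mulVecLin (a.updateRow j₀ 1)) ≠ ⊥ :=
    LinearMap.ker_ne_bot_of_finrank_lt (by simpa using hcard)
  obtain ⟨d, hd, hd_ne⟩ := (Submodule.ne_bot_iff _).1 hker
  have hrow (j : ι) : a.updateRow j₀ 1 j ⬝ᵥ d = 0 := congrFun (LinearMap.mem_ker.1 hd) j
  have hsum : ∑ k, d k = 0 := by
    simpa only [Matrix.updateRow_self, one_dotProduct] using hrow j₀
  have hother (j : ι) (hj : j ≠ j₀) : a j ⬝ᵥ d = 0 := by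
    simpa only [Matrix.updateRow_ne hj] using hrow j
  have nonpos_of_row {e : K → ℝ} (h₀ : a j₀ ⬝ᵥ e ≤ 0) (h : ∀ j ≠ j₀, a j ⬝ᵥ e = 0) :
      a *ᵥ e ≤ 0 := fun j => by
    rcases eq_or_ne j j₀ with rfl | hj
    exacts [h₀, (h j hj).le]
  rcases le_total (a j₀ ⬝ᵥ d) 0 with hsign | hsign
  · exact ⟨d, hd_ne, hsum, nonpos_of_row hsign hother⟩
  · refine ⟨-d, neg_ne_zero.2 hd_ne, by simp [hsum], nonpos_of_row ?_ fun j hj => ?_⟩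
    · simpa using hsign
    · simp [hother j hj]

theorem exists_add_smul_mem_stdSimplex_apply_eq_zero {w d : K → ℝ} (hw : w ∈ stdSimplex ℝ K)
    (hd : d ≠ 0) (hsum : ∑ k, d k = 0) :
    ∃ t : ℝ, 0 ≤ t ∧ w + t • d ∈ stdSimplex ℝ K ∧ ∃ k, (w + t • d) k = 0 := by
  have hneg : (Finset.univ.filter fun k => d k < 0).Nonempty := by
    by_contra! hempty
    have hnonneg : 0 ≤ d := fun k => by
      simpa using Finset.filter_eq_empty_iff.1 hempty (Finset.mem_univ k)
    exact hd ((Fintype.sum_eq_zero_iff_of_nonneg hnonneg).1 hsum)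
  -- Move along `d` until the first coordinate vanishes.
  obtain ⟨k₀, hk₀, hmin⟩ := Finset.exists_min_image _ (fun k => w k / -d k) hneg
  simp only [Finset.mem_filter, Finset.mem_univ, true_and] at hk₀ hmin
  have ht : 0 ≤ w k₀ / -d k₀ := div_nonneg (hw.1 k₀) (by linarith)
  refine ⟨w k₀ / -d k₀, ht, ⟨fun k => ?_, ?_⟩, k₀, ?_⟩
  · simp only [Pi.add_apply, Pi.smul_apply, smul_eq_mul]
    rcases lt_or_ge (d k) 0 with hk | hk
    · have := (le_div_iff₀ (by linarith)).1 (hmin k hk)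
      linarith
    · exact add_nonneg (hw.1 k) (mul_nonneg ht hk)
  · simp [Finset.sum_add_distrib, ← Finset.mul_sum, hsum, hw.2]
  · have := hk₀.ne
    simp only [Pi.add_apply, Pi.smul_apply, smul_eq_mul]
    field_simp
    ring

theorem exists_mem_stdSimplex_apply_eq_zero_mulVec_le [Fintype ι] [Nonempty ι]
    (hcard : Fintype.card ι < Fintype.card K) (a : Matrix ι K ℝ) {w : K → ℝ}
    (hw : w ∈ stdSimplex ℝ K) :
    ∃ w' ∈ stdSimplex ℝ K, (∃ k, w' k = 0) ∧ a *ᵥ w' ≤ a *ᵥ w := by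
  obtain ⟨d, hd, hsum, had⟩ := exists_ne_zero_sum_eq_zero_mulVec_nonpos hcard a
  obtain ⟨t, ht, hmem, hzero⟩ := exists_add_smul_mem_stdSimplex_apply_eq_zero hw hd hsum
  refine ⟨w + t • d, hmem, hzero, ?_⟩
  rw [Matrix.mulVec_add, Matrix.mulVec_smul]
  exact add_le_of_nonpos_right (smul_nonpos_of_nonneg_of_nonpos ht had)

/-- The integral of `f` against the probability measure with mass `w k` at the point `q k`, written
as a finite sum so that it makes sense without a σ-algebra on `X`. -/
noncomputable def atomicIntegral (f : X → ℝ≥0∞) (w : stdSimplex ℝ K) (q : K → X) : ℝ≥0∞ :=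
  ∑ k, ENNReal.ofReal (w k) * f (q k)

theorem atomicIntegral_eq_ofReal {f : X → ℝ≥0∞} {q : K → X} (hfin : ∀ k, f (q k) ≠ ∞)
    (w : stdSimplex ℝ K) :
    atomicIntegral f w q = ENNReal.ofReal ((fun k => (f (q k)).toReal) ⬝ᵥ w) := by
  rw [atomicIntegral, dotProduct, ENNReal.ofReal_sum_of_nonneg fun k _ =>
    mul_nonneg ENNReal.toReal_nonneg (stdSimplex.zero_le w k)]
  refine Finset.sum_congr rfl fun k _ => ?_
  rw [ENNReal.ofReal_mul ENNReal.toReal_nonneg, ENNReal.ofReal_toReal (hfin k), mul_comm]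

theorem apply_ne_top_of_atomicIntegral_ne_top {f : X → ℝ≥0∞} {w : stdSimplex ℝ K} {q : K → X}
    (h : atomicIntegral f w q ≠ ∞) {k : K} (hk : w k ≠ 0) : f (q k) ≠ ∞ := by
  have hwk : ENNReal.ofReal (w k) ≠ 0 := by
    simpa using (stdSimplex.zero_le w k).lt_of_ne' hk
  exact fun htop => ENNReal.sum_ne_top.1 h k (Finset.mem_univ k) (by rw [htop, ENNReal.mul_top hwk])

theorem exists_atomicIntegral_eq_of_apply_eq_zero {N : ℕ} {w : stdSimplex ℝ (Fin (N + 1))}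
    {k : Fin (N + 1)} (hk : w k = 0) (q : Fin (N + 1) → X) :
    ∃ (w' : stdSimplex ℝ (Fin N)) (q' : Fin N → X),
      ∀ f : X → ℝ≥0∞, atomicIntegral f w' q' = atomicIntegral f w q := by
  have hsum : ∑ i, w (k.succAbove i) = 1 := by
    rw [← stdSimplex.sum_eq_one w, Fin.sum_univ_succAbove w k, hk, zero_add]
  refine ⟨⟨fun i => w (k.succAbove i), fun i => stdSimplex.zero_le w _, hsum⟩,
    fun i => q (k.succAbove i), fun f => ?_⟩
  simp only [atomicIntegral, Fin.sum_univ_succAbove (fun i => ENNReal.ofReal (w i) * f (q i)) k, hk,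
    ENNReal.ofReal_zero, zero_mul, zero_add]
  rfl

theorem exists_atomicIntegral_le_of_succ [Fintype ι] [Nonempty ι] {N : ℕ} (hN : Fintype.card ι ≤ N)
    {f : ι → X → ℝ≥0∞} {w : stdSimplex ℝ (Fin (N + 1))} {q : Fin (N + 1) → X}
    (hfin : ∀ j, atomicIntegral (f j) w q ≠ ∞) :
    ∃ (w' : stdSimplex ℝ (Fin N)) (q' : Fin N → X),
      ∀ j, atomicIntegral (f j) w' q' ≤ atomicIntegral (f j) w q := by
  by_cases hzero : ∃ k, w k = 0
  · obtain ⟨k, hk⟩ := hzero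
    obtain ⟨w', q', h⟩ := exists_atomicIntegral_eq_of_apply_eq_zero hk q
    exact ⟨w', q', fun j => (h (f j)).le⟩
  push Not at hzero
  have hfq (j : ι) (k : Fin (N + 1)) : f j (q k) ≠ ∞ :=
    apply_ne_top_of_atomicIntegral_ne_top (hfin j) (hzero k)
  obtain ⟨u, hu, ⟨k, hk⟩, hle⟩ := exists_mem_stdSimplex_apply_eq_zero_mulVec_le
    (by simpa using Nat.lt_succ_of_le hN) (fun j k => (f j (q k)).toReal) w.2
  obtain ⟨w', q', h⟩ := exists_atomicIntegral_eq_of_apply_eq_zero (w := ⟨u, hu⟩) hk q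
  refine ⟨w', q', fun j => ?_⟩
  rw [h, atomicIntegral_eq_ofReal (hfq j), atomicIntegral_eq_ofReal (hfq j)]
  exact ENNReal.ofReal_le_ofReal (hle j)

theorem exists_atomicIntegral_le_of_add [Fintype ι] [Nonempty ι] {N : ℕ}
    (hN : Fintype.card ι ≤ N) (M : ℕ) {f : ι → X → ℝ≥0∞} {w : stdSimplex ℝ (Fin (N + M))}
    {q : Fin (N + M) → X} (hfin : ∀ j, atomicIntegral (f j) w q ≠ ∞) :
    ∃ (w' : stdSimplex ℝ (Fin N)) (q' : Fin N → X),
      ∀ j, atomicIntegral (f j) w' q' ≤ atomicIntegral (f j) w q := by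
  induction M with
  | zero => exact ⟨w, q, fun j => le_rfl⟩
  | succ M ih =>
    obtain ⟨w₁, q₁, h₁⟩ := exists_atomicIntegral_le_of_succ (hN.trans (Nat.le_add_right N M)) hfin
    obtain ⟨w₂, q₂, h₂⟩ := ih fun j => ((h₁ j).trans_lt (hfin j).lt_top).ne
    exact ⟨w₂, q₂, fun j => (h₂ j).trans (h₁ j)⟩

theorem exists_atomicIntegral_eq_convexComb {M N : ℕ} {a b : ℝ} (ha : 0 ≤ a) (hb : 0 ≤ b)
    (hab : a + b = 1) (w₁ : stdSimplex ℝ (Fin M)) (q₁ : Fin M → X)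
    (w₂ : stdSimplex ℝ (Fin N)) (q₂ : Fin N → X) :
    ∃ (w : stdSimplex ℝ (Fin (M + N))) (q : Fin (M + N) → X), ∀ f : X → ℝ≥0∞,
      atomicIntegral f w q = ENNReal.ofReal a * atomicIntegral f w₁ q₁ +
        ENNReal.ofReal b * atomicIntegral f w₂ q₂ := by
  refine ⟨⟨Fin.append (a • ⇑w₁) (b • ⇑w₂), fun k => ?_, ?_⟩, Fin.append q₁ q₂, fun f => ?_⟩
  · refine Fin.addCases (fun k => ?_) (fun k => ?_) k
    · simpa using mul_nonneg ha (stdSimplex.zero_le w₁ k)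
    · simpa using mul_nonneg hb (stdSimplex.zero_le w₂ k)
  · simp [Fin.sum_univ_add, ← Finset.mul_sum, hab]
  · simp only [atomicIntegral, DFunLike.coe, Fin.sum_univ_add, Fin.append_left, Fin.append_right,
      Pi.smul_apply, smul_eq_mul, ENNReal.ofReal_mul ha, ENNReal.ofReal_mul hb, mul_assoc,
      Finset.mul_sum]

/-- The budget vectors that some probability measure with at most `N` atoms respects: `f j` has
integral at most `c j` for all `j`. Budgets are real so that these vectors form a subset of a
Banach space. -/
def attainableBudgets (f : ι → X → ℝ≥0∞) (N : ℕ) : Set (ι → ℝ) :=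
  {c | 0 ≤ c ∧ ∃ (w : stdSimplex ℝ (Fin N)) (q : Fin N → X),
    ∀ j, atomicIntegral (f j) w q ≤ ENNReal.ofReal (c j)}

theorem convex_attainableBudgets [Fintype ι] [Nonempty ι] {N : ℕ} (hN : Fintype.card ι ≤ N)
    (f : ι → X → ℝ≥0∞) : Convex ℝ (attainableBudgets f N) := by
  rintro c₁ ⟨hc₁, w₁, q₁, h₁⟩ c₂ ⟨hc₂, w₂, q₂, h₂⟩ a b ha hb hab
  obtain ⟨w, q, hwq⟩ := exists_atomicIntegral_eq_convexComb ha hb hab w₁ q₁ w₂ q₂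
  have hle (j : ι) : atomicIntegral (f j) w q ≤ ENNReal.ofReal ((a • c₁ + b • c₂) j) := by
    simp only [hwq, Pi.add_apply, Pi.smul_apply, smul_eq_mul]
    rw [ENNReal.ofReal_add (mul_nonneg ha (hc₁ j)) (mul_nonneg hb (hc₂ j)),
      ENNReal.ofReal_mul ha, ENNReal.ofReal_mul hb]
    gcongr
    exacts [h₁ j, h₂ j]
  obtain ⟨w', q', h'⟩ := exists_atomicIntegral_le_of_add hN N
    fun j => ((hle j).trans_lt ENNReal.ofReal_lt_top).ne
  exact ⟨add_nonneg (smul_nonneg ha hc₁) (smul_nonneg hb hc₂), w', q',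
    fun j => (h' j).trans (hle j)⟩

theorem toReal_mem_attainableBudgets {f : ι → X → ℝ≥0∞} {N : ℕ} [NeZero N] {x : X}
    (hx : ∀ j, f j x ≠ ∞) : (fun j => (f j x).toReal) ∈ attainableBudgets f N := by
  refine ⟨fun j => ENNReal.toReal_nonneg, stdSimplex.vertex 0, fun _ => x, fun j => ?_⟩
  simp [atomicIntegral, ENNReal.ofReal_toReal (hx j), Pi.single_apply, apply_ite]

end FiniteSupport

section Compactness

variable {X ι K : Type*} [TopologicalSpace X]

theorem lowerSemicontinuous_ennreal_mul {u v : X → ℝ≥0∞} (hu : LowerSemicontinuous u)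
    (hv : LowerSemicontinuous v) : LowerSemicontinuous fun x => u x * v x := by
  intro x c hc
  obtain ⟨a, ha, b, hb, hab⟩ : ∃ a < u x, ∃ b < v x, c < a * b := by
    by_contra! h
    exact hc.not_ge (ENNReal.mul_le_of_forall_lt h)
  filter_upwards [hu x a ha, hv x b hb] with y hya hyb
  exact hab.trans_le (mul_le_mul' hya.le hyb.le)

theorem lowerSemicontinuous_atomicIntegral [Fintype K] {f : X → ℝ≥0∞} (hf : LowerSemicontinuous f) :
    LowerSemicontinuous fun z : stdSimplex ℝ K × (K → X) => atomicIntegral f z.1 z.2 := by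
  refine lowerSemicontinuous_sum fun k _ => lowerSemicontinuous_ennreal_mul ?_ ?_
  · have hweight : Continuous fun z : stdSimplex ℝ K × (K → X) => z.1 k :=
      (continuous_apply k).comp (continuous_subtype_val.comp continuous_fst)
    exact (ENNReal.continuous_ofReal.comp hweight).lowerSemicontinuous
  · exact hf.comp (by fun_prop)

theorem isClosed_attainableBudgets [CompactSpace X] {f : ι → X → ℝ≥0∞}
    (hf : ∀ j, LowerSemicontinuous (f j)) (N : ℕ) : IsClosed (attainableBudgets f N) := by
  have hgraph (j : ι) : IsClosed {z : (ι → ℝ) × (stdSimplex ℝ (Fin N) × (Fin N → X)) |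
      atomicIntegral (f j) z.2.1 z.2.2 ≤ ENNReal.ofReal (z.1 j)} := by
    have hcont : Continuous fun z : (ι → ℝ) × (stdSimplex ℝ (Fin N) × (Fin N → X)) =>
        (z.2, ENNReal.ofReal (z.1 j)) :=
      continuous_snd.prodMk (ENNReal.continuous_ofReal.comp (by fun_prop))
    exact (lowerSemicontinuous_atomicIntegral (hf j)).isClosed_epigraph.preimage hcont
  have himage : attainableBudgets f N = {c | 0 ≤ c} ∩ Prod.fst ''
      ⋂ j, {z : (ι → ℝ) × (stdSimplex ℝ (Fin N) × (Fin N → X)) |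
        atomicIntegral (f j) z.2.1 z.2.2 ≤ ENNReal.ofReal (z.1 j)} := by
    ext c
    simp [attainableBudgets]
  rw [himage]
  exact (isClosed_le continuous_const continuous_id).inter
    (isClosedMap_fst_of_compactSpace _ (isClosed_iInter hgraph))

variable [CompactSpace X] [MeasurableSpace X] [OpensMeasurableSpace X]

theorem exists_atomicIntegral_le_lintegral [Fintype ι] [Nonempty ι] {N : ℕ}
    (hN : Fintype.card ι ≤ N) {f : ι → X → ℝ≥0∞} (hf : ∀ j, LowerSemicontinuous (f j))
    (π : Measure X) [IsProbabilityMeasure π] (hfin : ∀ j, ∫⁻ x, f j x ∂π ≠ ∞) :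
    ∃ (w : stdSimplex ℝ (Fin N)) (q : Fin N → X),
      ∀ j, atomicIntegral (f j) w q ≤ ∫⁻ x, f j x ∂π := by
  have hmeas (j : ι) : Measurable (f j) := (hf j).measurable
  have hint (j : ι) : Integrable (fun x => (f j x).toReal) π :=
    integrable_toReal_of_lintegral_ne_top (hmeas j).aemeasurable (hfin j)
  have hae : ∀ᵐ x ∂π, (fun j => (f j x).toReal) ∈ attainableBudgets f N := by
    have : NeZero N := ⟨(Fintype.card_pos.trans_le hN).ne'⟩
    filter_upwards [ae_all_iff.2 fun j => ae_lt_top (hmeas j) (hfin j)] with x hx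
    exact toReal_mem_attainableBudgets fun j => (hx j).ne
  obtain ⟨-, w, q, hwq⟩ := (convex_attainableBudgets hN f).integral_mem
    (isClosed_attainableBudgets hf _) hae (Integrable.of_eval hint)
  refine ⟨w, q, fun j => (hwq j).trans_eq ?_⟩
  rw [eval_integral hint, integral_toReal (hmeas j).aemeasurable (ae_lt_top (hmeas j) (hfin j)),
    ENNReal.ofReal_toReal (hfin j)]

theorem exists_atomicIntegral_minimizer [Fintype ι] {g : X → ℝ≥0∞} (hg : LowerSemicontinuous g)
    {f : ι → X → ℝ≥0∞} (hf : ∀ j, LowerSemicontinuous (f j)) {b : ι → ℝ≥0}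
    (hfeas : ∃ π : Measure X, IsProbabilityMeasure π ∧ ∫⁻ x, g x ∂π ≠ ∞ ∧
      ∀ j, ∫⁻ x, f j x ∂π ≤ b j) :
    ∃ (w : stdSimplex ℝ (Fin (Fintype.card ι + 1))) (q : Fin (Fintype.card ι + 1) → X),
      (∀ j, atomicIntegral (f j) w q ≤ b j) ∧
      ∀ π : Measure X, IsProbabilityMeasure π → (∀ j, ∫⁻ x, f j x ∂π ≤ b j) →
        atomicIntegral g w q ≤ ∫⁻ x, g x ∂π := by
  let S : Set (stdSimplex ℝ (Fin (Fintype.card ι + 1)) × (Fin (Fintype.card ι + 1) → X)) :=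
    {z | ∀ j, atomicIntegral (f j) z.1 z.2 ≤ b j}
  have dominates (π : Measure X) [IsProbabilityMeasure π] (hπ : ∀ j, ∫⁻ x, f j x ∂π ≤ b j)
      (hgπ : ∫⁻ x, g x ∂π ≠ ∞) : ∃ z ∈ S, atomicIntegral g z.1 z.2 ≤ ∫⁻ x, g x ∂π := by
    obtain ⟨w, q, h⟩ := exists_atomicIntegral_le_lintegral Fintype.card_option.le
      (f := fun o : Option ι => o.elim g f) (Option.rec hg hf) π
      (Option.rec hgπ fun j => ((hπ j).trans_lt ENNReal.coe_lt_top).ne)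
    exact ⟨(w, q), fun j => (h (some j)).trans (hπ j), h none⟩
  have hclosed : IsClosed S := by
    simp only [S, Set.ofPred_forall]
    exact isClosed_iInter fun j => (lowerSemicontinuous_atomicIntegral (hf j)).isClosed_preimage _
  have hne : S.Nonempty := by
    obtain ⟨π, hprob, hgπ, hπ⟩ := hfeas
    obtain ⟨z, hz, -⟩ := dominates π hπ hgπ
    exact ⟨z, hz⟩
  obtain ⟨z, hz, hmin⟩ := (lowerSemicontinuous_atomicIntegral hg).lowerSemicontinuousOn S
    |>.exists_isMinOn hne hclosed.isCompact
  refine ⟨z.1, z.2, hz, fun π _ hπ => ?_⟩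
  by_cases hgπ : ∫⁻ x, g x ∂π = ∞
  · simp [hgπ]
  · obtain ⟨z', hz', hle⟩ := dominates π hπ hgπ
    exact (hmin hz').trans hle

end Compactness

section AtomicMeasure

variable {X K : Type*} [Fintype K] [MeasurableSpace X]

/-- The probability measure with mass `w k` at the point `q k`. -/
noncomputable def atomicMeasure (w : stdSimplex ℝ K) (q : K → X) : Measure X :=
  ∑ k, ENNReal.ofReal (w k) • Measure.dirac (q k)

instance isProbabilityMeasure_atomicMeasure (w : stdSimplex ℝ K) (q : K → X) :
    IsProbabilityMeasure (atomicMeasure w q) := by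
  constructor
  simp [atomicMeasure, ← ENNReal.ofReal_sum_of_nonneg fun k _ => stdSimplex.zero_le w k]

theorem lintegral_atomicMeasure {f : X → ℝ≥0∞} (hf : Measurable f) (w : stdSimplex ℝ K)
    (q : K → X) : ∫⁻ x, f x ∂atomicMeasure w q = atomicIntegral f w q := by
  simp only [atomicMeasure, atomicIntegral, lintegral_finsetSum_measure, lintegral_smul_measure,
    lintegral_dirac' _ hf, smul_eq_mul]

theorem exists_finset_card_le_atomicMeasure_compl_eq_zero [MeasurableSingletonClass X]
    (w : stdSimplex ℝ K) (q : K → X) :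
    ∃ s : Finset X, s.card ≤ Fintype.card K ∧ atomicMeasure w q (↑s)ᶜ = 0 := by
  classical
  refine ⟨Finset.univ.image q, Finset.card_image_le, ?_⟩
  simp [atomicMeasure, Set.indicator]

end AtomicMeasure

section Maximizer

variable {X ι : Type*} [MeasurableSpace X]

theorem lintegral_ofReal_const_sub {π : Measure X} [IsProbabilityMeasure π] {v : X → ℝ} {C : ℝ}
    (hv : Integrable v π) (hC : ∀ x, v x ≤ C) :
    ∫⁻ x, ENNReal.ofReal (C - v x) ∂π = ENNReal.ofReal (C - ∫ x, v x ∂π) := by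
  have hsub : ∫ x, (C - v x) ∂π = C - ∫ x, v x ∂π := by
    rw [integral_sub (integrable_const C) hv, integral_const, probReal_univ, one_smul]
  rw [← hsub]
  exact (ofReal_integral_eq_lintegral_ofReal ((integrable_const C).sub hv)
    (ae_of_all _ fun x => sub_nonneg.2 (hC x))).symm

theorem exists_sparse_maximizer [TopologicalSpace X] [CompactSpace X] [OpensMeasurableSpace X]
    [MeasurableSingletonClass X] [Fintype ι] {v : X → ℝ} {C : ℝ}
    (hvC : ∀ x, |v x| ≤ C) (hv : UpperSemicontinuous v) {f : ι → X → ℝ≥0∞}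
    (hf : ∀ j, LowerSemicontinuous (f j)) {b : ι → ℝ≥0}
    (hfeas : ∃ π : Measure X, IsProbabilityMeasure π ∧ ∀ j, ∫⁻ x, f j x ∂π ≤ b j) :
    ∃ π : Measure X, IsProbabilityMeasure π ∧ (∀ j, ∫⁻ x, f j x ∂π ≤ b j) ∧
      (∃ s : Finset X, s.card ≤ Fintype.card ι + 1 ∧ π (↑s)ᶜ = 0) ∧
      ∀ π' : Measure X, IsProbabilityMeasure π' → (∀ j, ∫⁻ x, f j x ∂π' ≤ b j) →
        ∫ x, v x ∂π' ≤ ∫ x, v x ∂π := by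
  have hle (x : X) : v x ≤ C := (le_abs_self _).trans (hvC x)
  have hint (π : Measure X) [IsProbabilityMeasure π] : Integrable v π :=
    .of_bound hv.measurable.aestronglyMeasurable C (ae_of_all _ hvC)
  have hcost : LowerSemicontinuous fun x => ENNReal.ofReal (C - v x) :=
    Continuous.comp_upperSemicontinuous_antitone (g := fun t => ENNReal.ofReal (C - t))
      (ENNReal.continuous_ofReal.comp (continuous_const.sub continuous_id)) hv
      fun s t hst => ENNReal.ofReal_le_ofReal (sub_le_sub_left hst C)
  have hloss (π : Measure X) [IsProbabilityMeasure π] := lintegral_ofReal_const_sub (hint π) hle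
  obtain ⟨w, q, hwq, hmin⟩ := exists_atomicIntegral_minimizer hcost hf (by
    obtain ⟨π, hprob, hπ⟩ := hfeas
    exact ⟨π, hprob, (hloss π).trans_ne ENNReal.ofReal_ne_top, hπ⟩)
  refine ⟨atomicMeasure w q, inferInstance, fun j => ?_, ?_, fun π' _ hπ' => ?_⟩
  · rw [lintegral_atomicMeasure (hf j).measurable]
    exact hwq j
  · simpa only [Fintype.card_fin] using exists_finset_card_le_atomicMeasure_compl_eq_zero w q
  · have hbound : ∫ x, v x ∂π' ≤ C := by
      simpa using integral_mono (hint π') (integrable_const C) hle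
    have h := hmin π' ‹_› hπ'
    rw [← lintegral_atomicMeasure hcost.measurable, hloss, hloss,
      ENNReal.ofReal_le_ofReal_iff (sub_nonneg.2 hbound)] at h
    exact (sub_le_sub_iff_left C).1 h

end Maximizer

section ConditionalProbability

variable {X Y : Type*} {mX : MeasurableSpace X} {mY : MeasurableSpace Y}

theorem condExp_indicator_comap_ae_eq_rnDeriv {P : Measure X} [IsFiniteMeasure P] {T : X → Y}
    (hT : Measurable T) {s : Set X} (hs : MeasurableSet s) :
    P[s.indicator (fun _ => (1 : ℝ)) | mY.comap T] =ᵐ[P]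
      fun z => (((P.restrict s).map T).rnDeriv (P.map T) (T z)).toReal := by
  have hindicator : s.indicator (fun _ => (1 : ℝ)) =ᵐ[P]
      fun z => ((P.restrict s).rnDeriv P z).toReal := by
    filter_upwards [Measure.rnDeriv_restrict_self P hs] with z hz
    by_cases hzs : z ∈ s <;> simp [hz, hzs]
  exact (condExp_congr_ae hindicator).trans
    (toReal_rnDeriv_map Measure.restrict_le_self.absolutelyContinuous hT).symm

theorem comp_ae_eq_condExp_indicator_comap_iff {P : Measure X} [IsFiniteMeasure P] {T : X → Y}
    (hT : Measurable T) {s : Set X} (hs : MeasurableSet s) {g : Y → ℝ} (hg : Measurable g)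
    (hg₀ : 0 ≤ g) :
    (fun z => g (T z)) =ᵐ[P] P[s.indicator (fun _ => (1 : ℝ)) | mY.comap T] ↔
      (P.map T).withDensity (fun y => ENNReal.ofReal (g y)) = (P.restrict s).map T := by
  have hac : (P.restrict s).map T ≪ P.map T :=
    Measure.restrict_le_self.absolutelyContinuous.map hT
  have hderiv : Measurable (((P.restrict s).map T).rnDeriv (P.map T)) :=
    Measure.measurable_rnDeriv _ _
  calc
    _ ↔ ∀ᵐ z ∂P, g (T z) = (((P.restrict s).map T).rnDeriv (P.map T) (T z)).toReal :=
      Filter.EventuallyEq.congr_right (condExp_indicator_comap_ae_eq_rnDeriv hT hs)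
    _ ↔ ∀ᵐ y ∂P.map T, g y = (((P.restrict s).map T).rnDeriv (P.map T) y).toReal :=
      (ae_map_iff hT.aemeasurable (measurableSet_eq_fun hg hderiv.ennreal_toReal)).symm
    _ ↔ (fun y => ENNReal.ofReal (g y)) =ᵐ[P.map T] ((P.restrict s).map T).rnDeriv (P.map T) := by
      refine Filter.eventually_congr ?_
      filter_upwards [Measure.rnDeriv_ne_top ((P.restrict s).map T) (P.map T)] with y hy
      rw [← ENNReal.toReal_eq_toReal_iff' ENNReal.ofReal_ne_top hy, ENNReal.toReal_ofReal (hg₀ y)]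
    _ ↔ _ := by
      rw [← withDensity_eq_iff_of_sigmaFinite hg.ennreal_ofReal.aemeasurable hderiv.aemeasurable,
        Measure.withDensity_rnDeriv_eq _ _ hac]

end ConditionalProbability

section JointDistribution

variable {Ω X Y : Type} [Fintype Ω] [MeasurableSpace Ω] [MeasurableSpace X] [MeasurableSpace Y]
  {p : Ω → ℝ} {μ : Ω → Measure X}

theorem jointP_apply [∀ ω, SFinite (μ ω)] {A : Set (Ω × X)} (hA : MeasurableSet A) :
    jointP p μ A = ∑ ω, ENNReal.ofReal (p ω) * μ ω (Prod.mk ω ⁻¹' A) := by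
  simp only [jointP, Measure.coe_finsetSum, Finset.sum_apply, Measure.smul_apply, smul_eq_mul,
    Measure.dirac_prod, Measure.map_apply measurable_prodMk_left hA]

instance isFiniteMeasure_jointP_s8 [∀ ω, IsFiniteMeasure (μ ω)] : IsFiniteMeasure (jointP p μ) := by
  refine ⟨?_⟩
  rw [jointP_apply MeasurableSet.univ, ENNReal.sum_lt_top]
  exact fun ω _ => ENNReal.mul_lt_top ENNReal.ofReal_lt_top (measure_lt_top _ _)

theorem map_jointP [∀ ω, SFinite (μ ω)] {T : X → Y} (hT : Measurable T) :
    (jointP p μ).map (fun z => T z.2) = ∑ ω, ENNReal.ofReal (p ω) • (μ ω).map T := by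
  ext B hB
  have hT₂ : Measurable fun z : Ω × X => T z.2 := hT.comp measurable_snd
  rw [Measure.map_apply hT₂ hB, jointP_apply (hT₂ hB)]
  simp only [Measure.coe_finsetSum, Finset.sum_apply, Measure.smul_apply, smul_eq_mul,
    Measure.map_apply hT hB, Set.preimage_preimage]

theorem map_restrict_jointP [MeasurableSingletonClass Ω] [∀ ω, SFinite (μ ω)] {T : X → Y}
    (hT : Measurable T) (ω : Ω) :
    ((jointP p μ).restrict {z | z.1 = ω}).map (fun z => T z.2) =
      ENNReal.ofReal (p ω) • (μ ω).map T := by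
  have hω : MeasurableSet {z : Ω × X | z.1 = ω} := measurable_fst (measurableSet_singleton ω)
  ext B hB
  have hT₂ : Measurable fun z : Ω × X => T z.2 := hT.comp measurable_snd
  rw [Measure.map_apply hT₂ hB, Measure.restrict_apply (hT₂ hB),
    jointP_apply ((hT₂ hB).inter hω),
    Finset.sum_eq_single_of_mem ω (Finset.mem_univ ω) fun ω' _ hne => ?_]
  · simp [Measure.map_apply hT hB, Set.preimage_preimage]
  · simp [hne]

end JointDistribution

section BayesConsistency

variable {Ω : Type} [Fintype Ω]

theorem measurable_belief_apply (ω : Ω) : Measurable fun x : Belief Ω => x.1 ω :=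
  (measurable_pi_apply ω).comp measurable_subtype_coe

/-- Bayes' rule for one receiver, free of conditional expectations. `M ω` is the law of the belief
restricted to the event that the state is `ω`, of total mass the prior probability of `ω`; its
density with respect to the unconditional law of the belief is the belief's own `ω`-coordinate. -/
def BayesConsistent (M : Ω → Measure (Belief Ω)) : Prop :=
  ∀ ω, (∑ ω', M ω').withDensity (fun x => ENNReal.ofReal (x.1 ω)) = M ω

theorem BayesConsistent.add {M N : Ω → Measure (Belief Ω)} (hM : BayesConsistent M)
    (hN : BayesConsistent N) : BayesConsistent (M + N) := fun ω => by
  simp only [Pi.add_apply, Finset.sum_add_distrib, withDensity_add_measure, hM ω, hN ω]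

theorem bayesConsistent_smul_dirac_vertex [DecidableEq Ω] (c : Ω → ℝ≥0∞) :
    BayesConsistent fun ω => c ω • Measure.dirac (stdSimplex.vertex ω : Belief Ω) := fun ω => by
  have hω : Measurable fun x : Belief Ω => ENNReal.ofReal (x.1 ω) :=
    (measurable_belief_apply ω).ennreal_ofReal
  rw [← Measure.sum_fintype, withDensity_sum, Measure.sum_fintype,
    Finset.sum_eq_single_of_mem ω (Finset.mem_univ ω) fun ω' _ hne => ?_]
  · simp [withDensity_smul_measure, dirac_withDensity' hω]
  · simp [withDensity_smul_measure, dirac_withDensity' hω, hne.symm]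

theorem feasible_iff_forall_bayesConsistent [MeasurableSpace Ω] [MeasurableSingletonClass Ω]
    {p : Ω → ℝ} {n : ℕ} {μ : Ω → Measure (Fin n → Belief Ω)} [∀ ω, IsProbabilityMeasure (μ ω)] :
    Feasible p n μ ↔
      ∀ i, BayesConsistent fun ω => ENNReal.ofReal (p ω) • (μ ω).map fun q => q i := by
  rw [Feasible, and_iff_right ‹_›]
  refine forall_congr' fun i => forall_congr' fun ω => ?_
  have hi : Measurable fun q : Fin n → Belief Ω => q i := measurable_pi_apply i
  have hi₂ : Measurable fun z : Ω × (Fin n → Belief Ω) => z.2 i := hi.comp measurable_snd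
  have hω : MeasurableSet {z : Ω × (Fin n → Belief Ω) | z.1 = ω} :=
    measurable_fst (measurableSet_singleton ω)
  beta_reduce
  rw [← map_jointP hi, ← map_restrict_jointP hi]
  exact comp_ae_eq_condExp_indicator_comap_iff hi₂ hω (measurable_belief_apply ω)
    fun x : Belief Ω => x.2.1 ω

end BayesConsistency

section LikelihoodRatio

variable {Ω : Type} [Fintype Ω]

/-- The ratio of the probabilities of `ω` and of `ω₀` under a belief, with `0 / 0 = 0` and
`a / 0 = ∞` for `a > 0`. -/
noncomputable def likelihoodRatio (ω₀ ω : Ω) (x : Belief Ω) : ℝ≥0∞ :=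
  ENNReal.ofReal (x.1 ω) / ENNReal.ofReal (x.1 ω₀)

theorem measurable_likelihoodRatio (ω₀ ω : Ω) : Measurable (likelihoodRatio ω₀ ω) :=
  (measurable_belief_apply ω).ennreal_ofReal.div (measurable_belief_apply ω₀).ennreal_ofReal

theorem lowerSemicontinuous_likelihoodRatio (ω₀ ω : Ω) :
    LowerSemicontinuous (likelihoodRatio ω₀ ω) := by
  have hcont (ω' : Ω) : Continuous fun x : Belief Ω => ENNReal.ofReal (x.1 ω') :=
    ENNReal.continuous_ofReal.comp ((continuous_apply ω').comp continuous_subtype_val)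
  exact lowerSemicontinuous_ennreal_mul (hcont ω).lowerSemicontinuous
    (hcont ω₀).inv.lowerSemicontinuous

theorem sum_likelihoodRatio (ω₀ : Ω) (x : Belief Ω) :
    ∑ ω, likelihoodRatio ω₀ ω x = (ENNReal.ofReal (x.1 ω₀))⁻¹ := by
  simp only [likelihoodRatio, div_eq_mul_inv]
  rw [← Finset.sum_mul, ← ENNReal.ofReal_sum_of_nonneg fun ω _ => x.2.1 ω, x.2.2,
    ENNReal.ofReal_one, one_mul]

theorem sum_withDensity_likelihoodRatio (ω₀ : Ω) (σ : Measure (Belief Ω)) :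
    ∑ ω, σ.withDensity (likelihoodRatio ω₀ ω) =
      σ.withDensity fun x => (ENNReal.ofReal (x.1 ω₀))⁻¹ := by
  rw [← Measure.sum_fintype, ← withDensity_tsum (measurable_likelihoodRatio ω₀)]
  congr 1 with x
  rw [tsum_fintype, Finset.sum_apply, sum_likelihoodRatio]

theorem bayesConsistent_withDensity_likelihoodRatio (ω₀ : Ω) (σ : Measure (Belief Ω)) :
    BayesConsistent fun ω => σ.withDensity (likelihoodRatio ω₀ ω) := fun ω => by
  have hinv : Measurable fun x : Belief Ω => (ENNReal.ofReal (x.1 ω₀))⁻¹ :=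
    (measurable_belief_apply ω₀).ennreal_ofReal.inv
  rw [sum_withDensity_likelihoodRatio,
    ← withDensity_mul _ hinv (measurable_belief_apply ω).ennreal_ofReal]
  congr 1 with x
  rw [Pi.mul_apply, mul_comm, ← div_eq_mul_inv, likelihoodRatio]

theorem BayesConsistent.lintegral_likelihoodRatio_le {M : Ω → Measure (Belief Ω)}
    (hM : BayesConsistent M) (ω₀ ω : Ω) :
    ∫⁻ x, likelihoodRatio ω₀ ω x ∂M ω₀ ≤ M ω Set.univ := by
  set Q := ∑ ω, M ω
  calc ∫⁻ x, likelihoodRatio ω₀ ω x ∂M ω₀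
      = ∫⁻ x, ENNReal.ofReal (x.1 ω₀) * likelihoodRatio ω₀ ω x ∂Q := by
        rw [← hM ω₀]
        exact lintegral_withDensity_eq_lintegral_mul _
          (measurable_belief_apply ω₀).ennreal_ofReal (measurable_likelihoodRatio ω₀ ω)
    _ ≤ ∫⁻ x, ENNReal.ofReal (x.1 ω) ∂Q := lintegral_mono fun x => ENNReal.mul_div_le
    _ = M ω Set.univ := by
        rw [← hM ω, withDensity_apply _ MeasurableSet.univ, Measure.restrict_univ]

theorem likelihoodRatio_self_ae_eq_one {ω₀ : Ω} {σ : Measure (Belief Ω)}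
    (hσ : ∀ ω ≠ ω₀, ∫⁻ x, likelihoodRatio ω₀ ω x ∂σ ≠ ∞) : likelihoodRatio ω₀ ω₀ =ᵐ[σ] 1 := by
  have hfin : ∀ᵐ x ∂σ, ∀ ω, likelihoodRatio ω₀ ω x ≠ ∞ := by
    refine ae_all_iff.2 fun ω => ?_
    rcases eq_or_ne ω ω₀ with rfl | hω
    · exact ae_of_all _ fun x => (ENNReal.div_self_le_one.trans_lt ENNReal.one_lt_top).ne
    · exact (ae_lt_top (measurable_likelihoodRatio ω₀ ω) (hσ ω hω)).mono fun x hx => hx.ne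
  filter_upwards [hfin] with x hx
  have hinv : (ENNReal.ofReal (x.1 ω₀))⁻¹ ≠ ∞ := by
    rw [← sum_likelihoodRatio]
    exact ENNReal.sum_ne_top.2 fun ω _ => hx ω
  exact ENNReal.div_self (ENNReal.inv_ne_top.1 hinv) ENNReal.ofReal_ne_top

theorem exists_bayesConsistent_extension {ω₀ : Ω} {σ : Measure (Belief Ω)} {m : Ω → ℝ≥0∞}
    (hm : ∀ ω ≠ ω₀, m ω ≠ ∞) (hσ₀ : σ Set.univ = m ω₀)
    (hσ : ∀ ω ≠ ω₀, ∫⁻ x, likelihoodRatio ω₀ ω x ∂σ ≤ m ω) :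
    ∃ M : Ω → Measure (Belief Ω),
      BayesConsistent M ∧ M ω₀ = σ ∧ ∀ ω, M ω Set.univ = m ω := by
  classical
  have hself : likelihoodRatio ω₀ ω₀ =ᵐ[σ] 1 :=
    likelihoodRatio_self_ae_eq_one fun ω hω => ((hσ ω hω).trans_lt (hm ω hω).lt_top).ne
  have hself_int : ∫⁻ x, likelihoodRatio ω₀ ω₀ x ∂σ = m ω₀ := by
    rw [lintegral_congr_ae hself, ← hσ₀, Pi.one_def, lintegral_one]
  have hle (ω : Ω) : ∫⁻ x, likelihoodRatio ω₀ ω x ∂σ ≤ m ω := by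
    rcases eq_or_ne ω ω₀ with rfl | hω
    · exact hself_int.le
    · exact hσ ω hω
  -- The mass missing in state `ω` is spent on revealing `ω`.
  set residual : Ω → ℝ≥0∞ := fun ω => m ω - ∫⁻ x, likelihoodRatio ω₀ ω x ∂σ with hresidual
  refine ⟨_, (bayesConsistent_withDensity_likelihoodRatio ω₀ σ).add
    (bayesConsistent_smul_dirac_vertex residual), ?_, fun ω => ?_⟩
  · have hresidual₀ : residual ω₀ = 0 := by simp only [hresidual, hself_int, tsub_self]
    rw [Pi.add_apply, hresidual₀, zero_smul, add_zero, withDensity_congr_ae hself,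
      withDensity_one]
  · rw [Pi.add_apply, Measure.add_apply, Measure.smul_apply, smul_eq_mul,
      withDensity_apply _ MeasurableSet.univ, Measure.restrict_univ, measure_univ, mul_one,
      add_tsub_cancel_of_le (hle ω)]

end LikelihoodRatio

section OneState

variable {Ω : Type} [Fintype Ω] {p : Ω → ℝ} {n : ℕ} {ω₀ : Ω}

/-- The constraints on the law of the belief profile in state `ω₀` under a feasible collection,
expressed through its marginals. -/
def OneStateAdmissible (p : Ω → ℝ) (ω₀ : Ω) (π : Measure (Fin n → Belief Ω)) : Prop :=
  IsProbabilityMeasure π ∧ ∀ (i : Fin n), ∀ ω ≠ ω₀,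
    ∫⁻ x, likelihoodRatio ω₀ ω x ∂(π.map fun q => q i) ≤ ENNReal.ofReal (p ω / p ω₀)

theorem oneStateAdmissible_iff_lintegral_le {π : Measure (Fin n → Belief Ω)} :
    OneStateAdmissible p ω₀ π ↔ IsProbabilityMeasure π ∧ ∀ j : Fin n × {ω : Ω // ω ≠ ω₀},
      ∫⁻ q, likelihoodRatio ω₀ j.2 (q j.1) ∂π ≤ (p j.2 / p ω₀).toNNReal := by
  refine and_congr_right fun _ => ?_
  simp only [Prod.forall, Subtype.forall]
  refine forall_congr' fun i => forall₂_congr fun ω _ => ?_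
  have hi : Measurable fun q : Fin n → Belief Ω => q i := measurable_pi_apply i
  rw [lintegral_map (measurable_likelihoodRatio ω₀ ω) hi]
  rfl

theorem lintegral_likelihoodRatio_smul_le_iff (hp₀ : 0 < p ω₀) (ω : Ω)
    (ρ : Measure (Belief Ω)) :
    ∫⁻ x, likelihoodRatio ω₀ ω x ∂(ENNReal.ofReal (p ω₀) • ρ) ≤ ENNReal.ofReal (p ω) ↔
      ∫⁻ x, likelihoodRatio ω₀ ω x ∂ρ ≤ ENNReal.ofReal (p ω / p ω₀) := by
  rw [ENNReal.ofReal_div_of_pos hp₀, ENNReal.le_div_iff_mul_le (by simp [hp₀]) (by simp),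
    lintegral_smul_measure, smul_eq_mul, mul_comm]

theorem oneStateAdmissible_dirac (hp : p ∈ stdSimplex ℝ Ω) (hp₀ : 0 < p ω₀) :
    OneStateAdmissible p ω₀ (Measure.dirac fun _ : Fin n => (⟨p, hp⟩ : Belief Ω)) := by
  refine ⟨inferInstance, fun i ω _ => ?_⟩
  rw [Measure.map_dirac' (measurable_pi_apply i),
    lintegral_dirac' _ (measurable_likelihoodRatio ω₀ ω), likelihoodRatio,
    ENNReal.ofReal_div_of_pos hp₀]

theorem exists_sparse_oneStateAdmissible_maximizer (hp : p ∈ stdSimplex ℝ Ω) (hp₀ : 0 < p ω₀)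
    {v : (Fin n → Belief Ω) → ℝ} {C : ℝ} (hvC : ∀ x, |v x| ≤ C) (hv : UpperSemicontinuous v) :
    ∃ π, OneStateAdmissible p ω₀ π ∧
      (∃ s : Finset (Fin n → Belief Ω),
        s.card ≤ n * (Fintype.card Ω - 1) + 1 ∧ π (↑s)ᶜ = 0) ∧
      ∀ π', OneStateAdmissible p ω₀ π' → ∫ x, v x ∂π' ≤ ∫ x, v x ∂π := by
  classical
  have hcard : Fintype.card (Fin n × {ω : Ω // ω ≠ ω₀}) = n * (Fintype.card Ω - 1) := by
    simp [Fintype.card_subtype_compl]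
  have hratio (j : Fin n × {ω : Ω // ω ≠ ω₀}) :
      LowerSemicontinuous fun q : Fin n → Belief Ω => likelihoodRatio ω₀ j.2 (q j.1) :=
    (lowerSemicontinuous_likelihoodRatio ω₀ j.2.1).comp (continuous_apply j.1)
  obtain ⟨π, hπ, hbudget, hsparse, hmax⟩ := exists_sparse_maximizer hvC hv hratio
    ⟨_, oneStateAdmissible_iff_lintegral_le.1 (oneStateAdmissible_dirac hp hp₀)⟩
  exact ⟨π, oneStateAdmissible_iff_lintegral_le.2 ⟨hπ, hbudget⟩, hcard ▸ hsparse, fun π' hπ' =>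
    hmax π' hπ'.1 (oneStateAdmissible_iff_lintegral_le.1 hπ').2⟩

theorem exists_probability_bayesConsistent_extension (hp : ∀ ω, 0 < p ω) {ρ : Measure (Belief Ω)}
    [IsProbabilityMeasure ρ]
    (hρ : ∀ ω ≠ ω₀, ∫⁻ x, likelihoodRatio ω₀ ω x ∂ρ ≤ ENNReal.ofReal (p ω / p ω₀)) :
    ∃ L : Ω → Measure (Belief Ω), (∀ ω, IsProbabilityMeasure (L ω)) ∧ L ω₀ = ρ ∧
      BayesConsistent fun ω => ENNReal.ofReal (p ω) • L ω := by
  obtain ⟨M, hM, hM₀, hmass⟩ := exists_bayesConsistent_extension (ω₀ := ω₀)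
    (σ := ENNReal.ofReal (p ω₀) • ρ) (m := fun ω => ENNReal.ofReal (p ω))
    (fun ω _ => ENNReal.ofReal_ne_top) (by simp)
    fun ω hω => (lintegral_likelihoodRatio_smul_le_iff (hp ω₀) ω ρ).2 (hρ ω hω)
  have hcancel (ω : Ω) : (ENNReal.ofReal (p ω))⁻¹ * ENNReal.ofReal (p ω) = 1 :=
    ENNReal.inv_mul_cancel (ENNReal.ofReal_pos.2 (hp ω)).ne' ENNReal.ofReal_ne_top
  refine ⟨fun ω => (ENNReal.ofReal (p ω))⁻¹ • M ω, fun ω => ⟨?_⟩, ?_, ?_⟩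
  · rw [Measure.smul_apply, hmass, smul_eq_mul, hcancel]
  · simp only [hM₀, smul_smul, hcancel, one_smul]
  · simpa only [smul_smul, mul_comm (ENNReal.ofReal _), hcancel, one_smul] using hM

theorem sum_mul_integral_ite_eq [DecidableEq Ω] (v : (Fin n → Belief Ω) → ℝ)
    (μ : Ω → Measure (Fin n → Belief Ω)) :
    ∑ ω, p ω * ∫ x, (if ω = ω₀ then v else fun _ => 0) x ∂μ ω = p ω₀ * ∫ x, v x ∂μ ω₀ := by
  rw [Finset.sum_eq_single_of_mem ω₀ (Finset.mem_univ ω₀) fun ω _ hω => by simp [hω], if_pos rfl]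

variable [MeasurableSpace Ω] [MeasurableSingletonClass Ω]

theorem Feasible.oneStateAdmissible {μ : Ω → Measure (Fin n → Belief Ω)} (hμ : Feasible p n μ)
    (hp₀ : 0 < p ω₀) : OneStateAdmissible p ω₀ (μ ω₀) := by
  have hprob : ∀ ω, IsProbabilityMeasure (μ ω) := hμ.1
  refine ⟨hprob ω₀, fun i ω _ => (lintegral_likelihoodRatio_smul_le_iff hp₀ ω _).1 ?_⟩
  have hmarg : IsProbabilityMeasure ((μ ω).map fun q => q i) :=
    Measure.isProbabilityMeasure_map (measurable_pi_apply i).aemeasurable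
  simpa using
    (feasible_iff_forall_bayesConsistent.1 hμ i).lintegral_likelihoodRatio_le ω₀ ω

theorem exists_feasible_of_oneStateAdmissible (hp : ∀ ω, 0 < p ω)
    {π : Measure (Fin n → Belief Ω)} (hπ : OneStateAdmissible p ω₀ π) :
    ∃ μ, Feasible p n μ ∧ μ ω₀ = π := by
  classical
  have := hπ.1
  have hmarg (i : Fin n) : IsProbabilityMeasure (π.map fun q => q i) :=
    Measure.isProbabilityMeasure_map (measurable_pi_apply i).aemeasurable
  choose L hLprob hL₀ hL using fun i => exists_probability_bayesConsistent_extension hp (hπ.2 i)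
  -- Feasibility only sees the marginals, so any coupling would do in the states `ω ≠ ω₀`.
  set μ : Ω → Measure (Fin n → Belief Ω) :=
    Function.update (fun ω => Measure.pi fun i => L i ω) ω₀ π
  have hμ₀ : μ ω₀ = π := Function.update_self ..
  have hμ {ω : Ω} (hω : ω ≠ ω₀) : μ ω = Measure.pi fun i => L i ω := Function.update_of_ne hω ..
  have hprob (ω : Ω) : IsProbabilityMeasure (μ ω) := by
    rcases eq_or_ne ω ω₀ with rfl | hω
    · rwa [hμ₀]
    · rw [hμ hω]; infer_instance
  have hmap (i : Fin n) (ω : Ω) : (μ ω).map (fun q => q i) = L i ω := by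
    rcases eq_or_ne ω ω₀ with rfl | hω
    · rw [hμ₀, hL₀]
    · rw [hμ hω, (measurePreserving_eval (fun i => L i ω) i).map_eq]
  refine ⟨μ, feasible_iff_forall_bayesConsistent.2 fun i => ?_, hμ₀⟩
  simpa only [hmap] using hL i

theorem val_ite_eq [DecidableEq Ω] (hp : ∀ ω, 0 < p ω) {v : (Fin n → Belief Ω) → ℝ}
    {π : Measure (Fin n → Belief Ω)} (hπ : OneStateAdmissible p ω₀ π)
    (hmax : ∀ π', OneStateAdmissible p ω₀ π' → ∫ x, v x ∂π' ≤ ∫ x, v x ∂π) :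
    Val p n (fun ω => if ω = ω₀ then v else fun _ => 0) = p ω₀ * ∫ x, v x ∂π := by
  refine IsGreatest.csSup_eq ⟨?_, ?_⟩
  · obtain ⟨μ, hμ, hμ₀⟩ := exists_feasible_of_oneStateAdmissible hp hπ
    exact ⟨μ, hμ, by rw [sum_mul_integral_ite_eq, hμ₀]⟩
  · rintro r ⟨μ, hμ, rfl⟩
    rw [sum_mul_integral_ite_eq]
    exact mul_le_mul_of_nonneg_left (hmax _ (hμ.oneStateAdmissible (hp ω₀))) (hp ω₀).le

end OneState

/-- one-state persuasion as a finite-dimensional optimization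
(Lemma `lm_one_state_counting_extreme`), with the supremum attained. -/
theorem one_state_value_eq
    {Ω : Type} [Fintype Ω] [DecidableEq Ω] [MeasurableSpace Ω] [MeasurableSingletonClass Ω]
    (hΩ : 2 ≤ Fintype.card Ω)
    (p : Ω → ℝ) (hp : ∀ ω, 0 < p ω) (hpsum : ∑ ω : Ω, p ω = 1)
    (n : ℕ) (hn : 1 ≤ n) (ω₀ : Ω)
    (v : (Fin n → Belief Ω) → ℝ)
    (hvb : ∃ C : ℝ, ∀ x, |v x| ≤ C)
    (hvusc : UpperSemicontinuous v) :
    ∃ m : ℝ,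
      IsGreatest
        { r : ℝ | ∃ π : Measure (Fin n → Belief Ω),
          IsProbabilityMeasure π ∧
          (∀ (i : Fin n) (ω : Ω), ω ≠ ω₀ →
            ∫⁻ x : Belief Ω, ENNReal.ofReal (x.1 ω) / ENNReal.ofReal (x.1 ω₀)
                ∂(π.map (fun q : Fin n → Belief Ω => q i))
              ≤ ENNReal.ofReal (p ω / p ω₀)) ∧
          (∃ s : Finset (Fin n → Belief Ω),
            s.card ≤ n * (Fintype.card Ω - 1) + 1 ∧ π (↑s)ᶜ = 0) ∧
          r = ∫ x, v x ∂π } m ∧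
      Val p n (fun ω => if ω = ω₀ then v else fun _ => 0) = p ω₀ * m := by
  obtain ⟨C, hC⟩ := hvb
  obtain ⟨π, hπ, hsparse, hmax⟩ := exists_sparse_oneStateAdmissible_maximizer (ω₀ := ω₀)
    ⟨fun ω => (hp ω).le, hpsum⟩ (hp ω₀) hC hvusc
  refine ⟨∫ x, v x ∂π, ⟨⟨π, hπ.1, hπ.2, hsparse, rfl⟩, ?_⟩, val_ite_eq hp hπ hmax⟩
  rintro r ⟨π', hπ', hbudget, -, rfl⟩
  exact hmax π' ⟨hπ', hbudget⟩
end
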